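/- Assume the finite-state Euler–Maruyama setting with multiplicative noise, the global Lipschitz condition with constant L, and condition (H) with parameters c_0 and (β_i). Assume in addition that the Markov chain generator Q is reversible with respect to a probability measure π on S (π_i q_ij = π_j q_ji for all i,j, with π_i > 0), and define the form D(f) := (1/2)Σ_{i,j} π_i q_ij (f_j − f_i)² − Σ_i π_i β_i f_i² and the principal eigenvalue λ_0 := inf{D(f) : f ∈ ℝ^N, Σ_i π_i f_i² = 1}. Assume λ_0 > 0. Let ξ ∈ ℝ^N be a strictly positive minimizer (Σ_i π_i ξ_i² = 1, ξ_i > 0 for all i, D(ξ) = λ_0), and set ξ̃_1 := max_i ξ_i, ξ̃_2 := (min_i ξ_i)^{−1}, β_0 := max_i |β_i|, q_0 := max_i(−q_ii), κ := [(1+12q_0)β_0 + 8L²(5+6β_0)]·ξ̃_1 ξ̃_2. Then for every stepsize δ ∈ (0,1) with δ < (1/(32L²)) ∧ (λ_0/κ)², the Euler–Maruyama transition kernel K_δ on ℝⁿ × S admits exactly one invariant probability measure π^δ. -/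

import Mathlib

open MeasureTheory ProbabilityTheory

/-- `Q` has nonnegative off-diagonal entries and every row sums to zero
(a conservative Q-matrix). -/
def IsConservativeQMatrix {N : ℕ} (Q : Matrix (Fin N) (Fin N) ℝ) : Prop :=
  (∀ i j, i ≠ j → 0 ≤ Q i j) ∧ ∀ i, ∑ j, Q i j = 0

/-- Irreducibility: any two distinct states are connected by a finite chain of
transitions with strictly positive rates. -/
def MatrixIrreducible {N : ℕ} (Q : Matrix (Fin N) (Fin N) ℝ) : Prop :=
  ∀ i j : Fin N, i ≠ j → ∃ (k : ℕ) (c : ℕ → Fin N),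
    c 0 = i ∧ c k = j ∧ ∀ l < k, 0 < Q (c l) (c (l + 1))

/-- The set of real parts of the (complex) eigenvalues of a real matrix. -/
def spectrumRe {N : ℕ} (M : Matrix (Fin N) (Fin N) ℝ) : Set ℝ :=
  {x : ℝ | ∃ γ ∈ spectrum ℂ (M.map Complex.ofReal), γ.re = x}

/-- The matrix exponential `exp M = ∑ₖ Mᵏ/k!`. -/
noncomputable def matExp {N : ℕ} (M : Matrix (Fin N) (Fin N) ℝ) :
    Matrix (Fin N) (Fin N) ℝ :=
  ∑' k : ℕ, ((k.factorial : ℝ)⁻¹) • M ^ k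

/-- Standard Gaussian measure on `ℝ^m`. -/
noncomputable def stdGaussianPi (m : ℕ) : Measure (Fin m → ℝ) :=
  Measure.pi fun _ => gaussianReal 0 1

/-- The distribution on `Fin N` with weights given by row `i` of `P`. -/
noncomputable def rowMeasure {N : ℕ} (P : Matrix (Fin N) (Fin N) ℝ) (i : Fin N) :
    Measure (Fin N) :=
  ∑ j : Fin N, ENNReal.ofReal (P i j) • Measure.dirac j

/-- Hilbert–Schmidt norm of a real matrix. -/
noncomputable def hsNorm {n m : ℕ} (M : Matrix (Fin n) (Fin m) ℝ) : ℝ :=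
  Real.sqrt (∑ i, ∑ j, (M i j) ^ 2)

/-- One step of the Euler–Maruyama scheme as a transition kernel on `ℝⁿ × S`:
starting from `(x, i)`, the next state is
`(x + δ b(x,i) + √δ σ(x,i) Z, J)` with `Z` standard Gaussian on `ℝ^m` and
`J` distributed according to row `i` of `exp(δ Q)`, independently. -/
noncomputable def EMKernel {n m N : ℕ} (Q : Matrix (Fin N) (Fin N) ℝ)
    (b : EuclideanSpace ℝ (Fin n) → Fin N → EuclideanSpace ℝ (Fin n))
    (σ : EuclideanSpace ℝ (Fin n) → Fin N → Matrix (Fin n) (Fin m) ℝ)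
    (δ : ℝ) (q : EuclideanSpace ℝ (Fin n) × Fin N) :
    Measure (EuclideanSpace ℝ (Fin n) × Fin N) :=
  Measure.map
    (fun zj : (Fin m → ℝ) × Fin N =>
      (q.1 + δ • b q.1 q.2 +
        Real.sqrt δ • ((WithLp.equiv 2 (Fin n → ℝ)).symm ((σ q.1 q.2).mulVec zj.1)),
        zj.2))
    ((stdGaussianPi m).prod (rowMeasure (matExp (δ • Q)) q.2))

/-- `π` is an invariant measure of the kernel `K`. -/
def IsInvariantMeasure {α : Type*} [MeasurableSpace α] (K : α → Measure α)
    (π : Measure α) : Prop :=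
  ∀ A : Set α, MeasurableSet A → ∫⁻ q, K q A ∂π = π A


/-- The bilinear form `D(f) = (1/2) Σ_{i,j} π_i q_ij (f_j - f_i)² - Σ_i π_i β_i f_i²`. -/
noncomputable def Dform {N : ℕ} (π : Fin N → ℝ) (Q : Matrix (Fin N) (Fin N) ℝ)
    (β : Fin N → ℝ) (f : Fin N → ℝ) : ℝ :=
  (1 / 2) * ∑ i, ∑ j, π i * Q i j * (f j - f i) ^ 2 - ∑ i, π i * β i * f i ^ 2


/-! ### Abstract ergodicity theorem -/

namespace EMAux

set_option linter.unusedSectionVars false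
set_option linter.style.haveILetI false
set_option linter.unusedVariables false

open Filter Topology

/-- Componentwise Lipschitz functions, with weights. -/
def LipC {E : Type*} [NormedAddCommGroup E] {N : ℕ} (v : Fin N → ℝ) (c : ℝ)
    (g : E × Fin N → ℝ) : Prop :=
  ∀ x y i, |g (x, i) - g (y, i)| ≤ c * v i * ‖x - y‖

lemma LipC.continuous {E : Type*} [NormedAddCommGroup E] {N : ℕ} {v : Fin N → ℝ} {c : ℝ}
    {g : E × Fin N → ℝ} (h : LipC v c g) : Continuous g := by
  rw [continuous_prod_of_discrete_right]
  intro i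
  have : LipschitzWith (Real.toNNReal (c * v i)) fun x => g (x, i) := by
    apply LipschitzWith.of_dist_le_mul
    intro x y
    rw [Real.dist_eq, dist_eq_norm]
    refine (h x y i).trans ?_
    gcongr
    exact Real.le_coe_toNNReal _
  exact this.continuous

/-- Bounded componentwise Lipschitz functions separate probability measures. -/
lemma ext_of_lip {E : Type*} [NormedAddCommGroup E] [MeasurableSpace E] [BorelSpace E]
    [SecondCountableTopology E] {N : ℕ} {v : Fin N → ℝ} (hv : ∀ i, 0 < v i)
    (μ ν : Measure (E × Fin N)) [IsProbabilityMeasure μ] [IsProbabilityMeasure ν]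
    (h : ∀ g : E × Fin N → ℝ, (∃ c, 0 ≤ c ∧ LipC v c g) → (∃ B, ∀ q, |g q| ≤ B) →
      ∫ q, g q ∂μ = ∫ q, g q ∂ν) : μ = ν := by
  letI : MetricSpace (Fin N) := TopologicalSpace.metrizableSpaceMetric (Fin N)
  let μ' : ProbabilityMeasure (E × Fin N) := ⟨μ, inferInstance⟩
  let ν' : ProbabilityMeasure (E × Fin N) := ⟨ν, inferInstance⟩
  have key : Tendsto (fun _ : ℕ => μ') atTop (𝓝 ν') := by
    rw [tendsto_iff_forall_lipschitz_integral_tendsto]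
    rintro f ⟨C, hC⟩ ⟨K, hK⟩
    have : ∫ q, f q ∂μ = ∫ q, f q ∂ν := by
      apply h
      · refine ⟨∑ i, K / v i, Finset.sum_nonneg fun i _ => div_nonneg K.2 (hv i).le, ?_⟩
        intro x y i
        have h1 := hK.dist_le_mul (x, i) (y, i)
        rw [Real.dist_eq] at h1
        have h2 : dist (x, i) (y, i) = ‖x - y‖ := by
          rw [Prod.dist_eq]; simp [dist_eq_norm]
        rw [h2] at h1
        refine h1.trans ?_
        gcongr
        have h3 : (K : ℝ) / v i ≤ ∑ i, K / v i :=
          Finset.single_le_sum (f := fun i => (K : ℝ) / v i)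
            (fun i _ => div_nonneg K.2 (hv i).le) (Finset.mem_univ i)
        rw [← div_le_iff₀ (hv i)]
        exact h3
      · rcases isEmpty_or_nonempty (E × Fin N) with he | ⟨⟨q0⟩⟩
        · exact ⟨0, fun q => he.elim q⟩
        · refine ⟨|f q0| + C, fun q => ?_⟩
          have h1 := hC q q0
          rw [Real.dist_eq] at h1
          have := abs_sub_abs_le_abs_sub (f q) (f q0)
          linarith
    change Tendsto (fun _ : ℕ => ∫ q, f q ∂μ) atTop (𝓝 (∫ q, f q ∂ν))
    rw [this]
    exact tendsto_const_nhds
  have h2 : μ' = ν' := tendsto_nhds_unique tendsto_const_nhds key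
  exact congrArg Subtype.val h2

lemma rec_tendsto {u : ℕ → ℝ} {ρ r C : ℝ} (hρ0 : 0 ≤ ρ) (hρ : ρ < 1) (hr0 : 0 ≤ r) (hr : r < 1)
    (hC : 0 ≤ C) (hu0 : ∀ n, 0 ≤ u n) (hu : ∀ n, u (n + 1) ≤ ρ * u n + C * r ^ n) :
    Tendsto u atTop (𝓝 0) := by
  obtain ⟨θ, h1, h2⟩ := exists_between (max_lt hρ hr)
  have hθρ : ρ < θ := (le_max_left _ _).trans_lt h1
  have hθr : r < θ := (le_max_right _ _).trans_lt h1
  set D := u 0 + C / (θ - ρ) with hD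
  have hCD : C ≤ D * (θ - ρ) := by
    rw [hD, add_mul, div_mul_cancel₀ _ (by linarith)]
    nlinarith [hu0 0]
  have hb : ∀ n, u n ≤ D * θ ^ n := by
    intro n
    induction n with
    | zero =>
      have : 0 ≤ C / (θ - ρ) := div_nonneg hC (by linarith)
      simp only [pow_zero, mul_one]; linarith
    | succ n ih =>
      have h3 : r ^ n ≤ θ ^ n := by gcongr
      have h4 : 0 ≤ θ ^ n := pow_nonneg (by linarith) n
      calc u (n + 1) ≤ ρ * u n + C * r ^ n := hu n
        _ ≤ ρ * (D * θ ^ n) + C * θ ^ n := by gcongr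
        _ ≤ ρ * (D * θ ^ n) + D * (θ - ρ) * θ ^ n := by gcongr
        _ = D * θ ^ (n + 1) := by ring
  have h5 : Tendsto (fun n => D * θ ^ n) atTop (𝓝 0) := by
    have := (tendsto_pow_atTop_nhds_zero_of_lt_one (by linarith) h2).const_mul D
    simpa using this
  exact squeeze_zero hu0 hb h5

lemma doeblin {N : ℕ} {P : Fin N → Fin N → ℝ} {ε : ℝ} (hP : ∀ i j, ε ≤ P i j)
    (hP0 : ∀ i j, 0 ≤ P i j) (hε : 0 ≤ ε)
    (hP1 : ∀ i, ∑ j, P i j = 1) (h : Fin N → ℝ) {w : ℝ} (hw : ∀ i j, |h i - h j| ≤ w)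
    (i j : Fin N) : |∑ k, P i k * h k - ∑ k, P j k * h k| ≤ (1 - ε) * w := by
  haveI : Nonempty (Fin N) := ⟨i⟩
  obtain ⟨a, ha⟩ := Finite.exists_max h
  obtain ⟨b, hb⟩ := Finite.exists_min h
  have hε1 : ε ≤ 1 := by
    rw [← hP1 i]
    exact (hP i i).trans (Finset.single_le_sum (f := fun k => P i k) (fun k _ => hP0 i k) (Finset.mem_univ i))
  have key : ∀ i j, ∑ k, P i k * h k - ∑ k, P j k * h k ≤ (1 - ε) * w := by
    intro i j
    have h1 : ∑ k, P i k * (h a - h k) ≥ ε * (h a - h b) := by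
      have := Finset.single_le_sum (f := fun k => P i k * (h a - h k))
        (fun k _ => mul_nonneg (hP0 i k) (sub_nonneg.2 (ha k))) (Finset.mem_univ b)
      refine le_trans ?_ this
      exact mul_le_mul_of_nonneg_right (hP i b) (sub_nonneg.2 (ha b))
    have h2 : ∑ k, P j k * (h k - h b) ≥ 0 :=
      Finset.sum_nonneg fun k _ => mul_nonneg (hP0 j k) (sub_nonneg.2 (hb k))
    have e1 : ∑ k, P i k * (h a - h k) = h a - ∑ k, P i k * h k := by
      simp only [mul_sub, Finset.sum_sub_distrib, ← Finset.sum_mul, hP1, one_mul]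
    have e2 : ∑ k, P j k * (h k - h b) = ∑ k, P j k * h k - h b := by
      simp only [mul_sub, Finset.sum_sub_distrib, ← Finset.sum_mul, hP1, one_mul]
    have h3 := (le_abs_self _).trans (hw a b)
    nlinarith
  rw [abs_le]
  constructor
  · linarith [key j i]
  · exact key i j

/-- The abstract hypotheses on the kernel. -/
structure Setup {E Z : Type*} [NormedAddCommGroup E] [MeasurableSpace E] [MeasurableSpace Z]
    {N : ℕ} (κ : Kernel (E × Fin N) (E × Fin N)) (γ : Measure Z) (P : Fin N → Fin N → ℝ)
    (F : E → Fin N → Z → E) (s v : Fin N → ℝ) (r : ℝ) : Prop where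
  P0 : ∀ i j, 0 < P i j
  P1 : ∀ i, ∑ j, P i j = 1
  v0 : ∀ i, 0 < v i
  r0 : 0 ≤ r
  r1 : r < 1
  contr : ∀ i, s i * ∑ j, P i j * v j ≤ r * v i
  Fmeas : ∀ x i, AEStronglyMeasurable (F x i) γ
  Fint : ∀ x i, Integrable (F x i) γ
  Flip : ∀ x y i, ∫ z, ‖F x i z - F y i z‖ ∂γ ≤ s i * ‖x - y‖
  formula : ∀ x i, ∀ g : E × Fin N → ℝ, Continuous g →
    (∀ j, Integrable (fun z => g (F x i z, j)) γ) →
    Integrable g (κ (x, i)) ∧ ∫ q, g q ∂(κ (x, i)) = ∑ j, P i j * ∫ z, g (F x i z, j) ∂γ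

section
variable {E Z : Type*} [NormedAddCommGroup E] [MeasurableSpace E] [BorelSpace E]
    [SecondCountableTopology E] [ProperSpace E]
    [MeasurableSpace Z]
    {N : ℕ} {κ : Kernel (E × Fin N) (E × Fin N)} {γ : Measure Z} {P : Fin N → Fin N → ℝ}
    {F : E → Fin N → Z → E} {s v : Fin N → ℝ} {r : ℝ}

/-- The transition operator. -/
noncomputable def T {X : Type*} [MeasurableSpace X] (κ : Kernel X X) (g : X → ℝ) (q : X) : ℝ := ∫ p, g p ∂(κ q)

lemma Setup.int_comp [IsProbabilityMeasure γ] (S : Setup κ γ P F s v r) {c : ℝ} {g : E × Fin N → ℝ}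
    (hg : LipC v c g) (x : E) (i j : Fin N) : Integrable (fun z => g (F x i z, j)) γ := by
  have h1 : Integrable (fun z => |g (0, j)| + |c * v j| * ‖F x i z‖) γ :=
    (integrable_const _).add ((S.Fint x i).norm.const_mul _)
  refine h1.mono' ?_ ?_
  · exact (hg.continuous.comp (Continuous.prodMk_left j)).comp_aestronglyMeasurable (S.Fmeas x i)
  · refine Eventually.of_forall fun z => ?_
    have h2 := hg (F x i z) 0 j
    rw [sub_zero] at h2
    have h3 := abs_sub_abs_le_abs_sub (g (F x i z, j)) (g (0, j))
    have h4 : c * v j * ‖F x i z‖ ≤ |c * v j| * ‖F x i z‖ := by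
      gcongr; exact le_abs_self _
    rw [Real.norm_eq_abs]; linarith

lemma Setup.integrable [IsProbabilityMeasure γ] (S : Setup κ γ P F s v r) {c : ℝ} {g : E × Fin N → ℝ}
    (hg : LipC v c g) (q : E × Fin N) : Integrable g (κ q) :=
  (S.formula q.1 q.2 g hg.continuous (fun j => S.int_comp hg _ _ _)).1

lemma Setup.T_eq [IsProbabilityMeasure γ] (S : Setup κ γ P F s v r) {c : ℝ} {g : E × Fin N → ℝ}
    (hg : LipC v c g) (x : E) (i : Fin N) :
    T κ g (x, i) = ∑ j, P i j * ∫ z, g (F x i z, j) ∂γ :=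
  (S.formula x i g hg.continuous (fun j => S.int_comp hg _ _ _)).2

lemma Setup.lip_T [IsProbabilityMeasure γ] (S : Setup κ γ P F s v r) {c : ℝ} (hc : 0 ≤ c)
    {g : E × Fin N → ℝ} (hg : LipC v c g) : LipC v (r * c) (T κ g) := by
  intro x y i
  rw [S.T_eq hg, S.T_eq hg, ← Finset.sum_sub_distrib]
  have h1 : ∀ j, |P i j * ∫ z, g (F x i z, j) ∂γ - P i j * ∫ z, g (F y i z, j) ∂γ|
      ≤ P i j * (c * v j * (s i * ‖x - y‖)) := by
    intro j
    rw [← mul_sub, abs_mul, abs_of_pos (S.P0 i j)]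
    refine mul_le_mul_of_nonneg_left ?_ (S.P0 i j).le
    rw [← integral_sub (S.int_comp hg _ _ _) (S.int_comp hg _ _ _)]
    have hcv : 0 ≤ c * v j := mul_nonneg hc (S.v0 j).le
    calc |∫ z, (g (F x i z, j) - g (F y i z, j)) ∂γ|
        ≤ ∫ z, |g (F x i z, j) - g (F y i z, j)| ∂γ := abs_integral_le_integral_abs
      _ ≤ ∫ z, c * v j * ‖F x i z - F y i z‖ ∂γ := by
          apply integral_mono ((S.int_comp hg _ _ _).sub (S.int_comp hg _ _ _)).abs
            (((S.Fint x i).sub (S.Fint y i)).norm.const_mul _)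
          intro z; exact hg _ _ _
      _ = c * v j * ∫ z, ‖F x i z - F y i z‖ ∂γ := integral_const_mul _ _
      _ ≤ c * v j * (s i * ‖x - y‖) := mul_le_mul_of_nonneg_left (S.Flip x y i) hcv
  calc _ ≤ ∑ j, |P i j * ∫ z, g (F x i z, j) ∂γ - P i j * ∫ z, g (F y i z, j) ∂γ| :=
        Finset.abs_sum_le_sum_abs _ _
    _ ≤ ∑ j, P i j * (c * v j * (s i * ‖x - y‖)) := Finset.sum_le_sum fun j _ => h1 j
    _ = c * ‖x - y‖ * (s i * ∑ j, P i j * v j) := by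
        rw [Finset.mul_sum, Finset.mul_sum]; exact Finset.sum_congr rfl fun j _ => by ring
    _ ≤ c * ‖x - y‖ * (r * v i) :=
        mul_le_mul_of_nonneg_left (S.contr i) (mul_nonneg hc (norm_nonneg _))
    _ = r * c * v i * ‖x - y‖ := by ring

lemma Setup.lip_iter [IsProbabilityMeasure γ] (S : Setup κ γ P F s v r) {c : ℝ} (hc : 0 ≤ c)
    {g : E × Fin N → ℝ} (hg : LipC v c g) (n : ℕ) : LipC v (r ^ n * c) ((T κ)^[n] g) := by
  induction n with
  | zero => simpa using hg
  | succ n ih =>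
    rw [Function.iterate_succ_apply']
    have := S.lip_T (mul_nonneg (pow_nonneg S.r0 n) hc) ih
    convert this using 1; ring

/-- One step at the base point. -/
lemma Setup.base_step [IsProbabilityMeasure γ] (S : Setup κ γ P F s v r) :
    ∃ C, 0 ≤ C ∧ ∀ c, 0 ≤ c → ∀ g : E × Fin N → ℝ, LipC v c g → ∀ i,
      |T κ g (0, i) - ∑ j, P i j * g (0, j)| ≤ C * c := by
  refine ⟨∑ i, ∑ j, P i j * (v j * ∫ z, ‖F 0 i z‖ ∂γ), ?_, ?_⟩
  · refine Finset.sum_nonneg fun i _ => Finset.sum_nonneg fun j _ => ?_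
    exact mul_nonneg (S.P0 i j).le (mul_nonneg (S.v0 j).le (integral_nonneg fun z => norm_nonneg _))
  intro c hc g hg i
  rw [S.T_eq hg, ← Finset.sum_sub_distrib]
  have h1 : ∀ j, |P i j * ∫ z, g (F 0 i z, j) ∂γ - P i j * g (0, j)|
      ≤ P i j * (v j * ∫ z, ‖F 0 i z‖ ∂γ) * c := by
    intro j
    rw [← mul_sub, abs_mul, abs_of_pos (S.P0 i j), mul_assoc]
    refine mul_le_mul_of_nonneg_left ?_ (S.P0 i j).le
    have e : g (0, j) = ∫ _, g (0, j) ∂γ := by simp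
    rw [e, ← integral_sub (S.int_comp hg _ _ _) (integrable_const _)]
    calc |∫ z, (g (F 0 i z, j) - g (0, j)) ∂γ|
        ≤ ∫ z, |g (F 0 i z, j) - g (0, j)| ∂γ := abs_integral_le_integral_abs
      _ ≤ ∫ z, c * v j * ‖F 0 i z‖ ∂γ := by
          apply integral_mono ((S.int_comp hg _ _ _).sub (integrable_const _)).abs
            ((S.Fint 0 i).norm.const_mul _)
          intro z; simpa using hg (F 0 i z) 0 j
      _ = c * v j * ∫ z, ‖F 0 i z‖ ∂γ := integral_const_mul _ _
      _ = _ := by ring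
  calc _ ≤ ∑ j, |P i j * ∫ z, g (F 0 i z, j) ∂γ - P i j * g (0, j)| :=
        Finset.abs_sum_le_sum_abs _ _
    _ ≤ ∑ j, P i j * (v j * ∫ z, ‖F 0 i z‖ ∂γ) * c := Finset.sum_le_sum fun j _ => h1 j
    _ = (∑ j, P i j * (v j * ∫ z, ‖F 0 i z‖ ∂γ)) * c := by rw [Finset.sum_mul]
    _ ≤ _ := by
      refine mul_le_mul_of_nonneg_right ?_ hc
      refine Finset.single_le_sum (f := fun i => ∑ j, P i j * (v j * ∫ z, ‖F 0 i z‖ ∂γ)) ?_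
        (Finset.mem_univ i)
      intro i _
      refine Finset.sum_nonneg fun j _ => ?_
      exact mul_nonneg (S.P0 i j).le
        (mul_nonneg (S.v0 j).le (integral_nonneg fun z => norm_nonneg _))

lemma Setup.osc [IsProbabilityMeasure γ] (S : Setup κ γ P F s v r) {c : ℝ} (hc : 0 ≤ c)
    {g : E × Fin N → ℝ} (hg : LipC v c g) :
    ∃ w : ℕ → ℝ, Tendsto w atTop (𝓝 0) ∧
      ∀ n i j, |(T κ)^[n] g (0, i) - (T κ)^[n] g (0, j)| ≤ w n := by
  rcases isEmpty_or_nonempty (Fin N) with he | hne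
  · exact ⟨fun _ => 0, tendsto_const_nhds, fun n i => he.elim i⟩
  obtain ⟨C, hC, hb⟩ := S.base_step
  obtain ⟨p, hp⟩ := Finite.exists_min (fun p : Fin N × Fin N => P p.1 p.2)
  set ε := P p.1 p.2 with hε
  have hε0 : 0 < ε := S.P0 _ _
  have hPε : ∀ i j, ε ≤ P i j := fun i j => hp (i, j)
  have hε1 : ε ≤ 1 := by
    rw [← S.P1 p.1]
    exact Finset.single_le_sum (f := fun k => P p.1 k) (fun k _ => (S.P0 _ k).le) (Finset.mem_univ p.2)
  let w0 := ∑ i, ∑ j, |g (0, i) - g (0, j)|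
  let w : ℕ → ℝ := fun n => Nat.rec w0 (fun n w => (1 - ε) * w + 2 * C * c * r ^ n) n
  have hw0 : ∀ n, 0 ≤ w n := by
    intro n
    induction n with
    | zero => exact Finset.sum_nonneg fun i _ => Finset.sum_nonneg fun j _ => abs_nonneg _
    | succ n ih =>
      change 0 ≤ (1 - ε) * w n + 2 * C * c * r ^ n
      have := S.r0
      have : 0 ≤ (1 - ε) * w n := mul_nonneg (by linarith) ih
      positivity
  refine ⟨w, rec_tendsto (ρ := 1 - ε) (r := r) (C := 2 * C * c) (by linarith) (by linarith) S.r0 S.r1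
    (by positivity) hw0 (fun n => le_rfl), ?_⟩
  intro n
  induction n with
  | zero =>
    intro i j
    change _ ≤ ∑ i, ∑ j, |g (0, i) - g (0, j)|
    calc |g (0, i) - g (0, j)| ≤ ∑ j, |g (0, i) - g (0, j)| :=
          Finset.single_le_sum (f := fun j => |g (0, i) - g (0, j)|) (fun _ _ => abs_nonneg _) (Finset.mem_univ j)
      _ ≤ _ := Finset.single_le_sum (f := fun i => ∑ j, |g (0, i) - g (0, j)|)
          (fun _ _ => Finset.sum_nonneg fun _ _ => abs_nonneg _) (Finset.mem_univ i)
  | succ n ih =>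
    intro i j
    change _ ≤ (1 - ε) * w n + 2 * C * c * r ^ n
    rw [Function.iterate_succ_apply']
    have hl := S.lip_iter hc hg n
    have hrc : 0 ≤ r ^ n * c := mul_nonneg (pow_nonneg S.r0 n) hc
    have h1 := abs_le.1 (hb _ hrc _ hl i)
    have h2 := abs_le.1 (hb _ hrc _ hl j)
    have h3 := abs_le.1 (doeblin hPε (fun i j => (S.P0 i j).le) hε0.le S.P1
      (fun k => (T κ)^[n] g (0, k)) ih i j)
    rw [abs_le]
    constructor <;> linarith [h1.1, h1.2, h2.1, h2.2, h3.1, h3.2]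

lemma Setup.tendsto_diff [IsProbabilityMeasure γ] (S : Setup κ γ P F s v r) {c : ℝ} (hc : 0 ≤ c)
    {g : E × Fin N → ℝ} (hg : LipC v c g) (q : E × Fin N) (j : Fin N) :
    Tendsto (fun n => (T κ)^[n] g q - (T κ)^[n] g (0, j)) atTop (𝓝 0) := by
  obtain ⟨w, hw, hwb⟩ := S.osc hc hg
  have h1 : Tendsto (fun n => r ^ n * c * v q.2 * ‖q.1‖ + w n) atTop (𝓝 0) := by
    have := (((tendsto_pow_atTop_nhds_zero_of_lt_one S.r0 S.r1).mul_const c).mul_const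
      (v q.2)).mul_const ‖q.1‖
    simpa using this.add hw
  refine squeeze_zero_norm (fun n => ?_) h1
  have h2 := S.lip_iter hc hg n q.1 0 q.2
  have h3 := hwb n q.2 j
  rw [sub_zero] at h2
  rw [Real.norm_eq_abs]
  calc _ = |((T κ)^[n] g (q.1, q.2) - (T κ)^[n] g (0, q.2)) + ((T κ)^[n] g (0, q.2) - (T κ)^[n] g (0, j))| := by
        congr 1; ring
    _ ≤ _ := (abs_add_le _ _).trans (add_le_add h2 h3)

lemma Setup.tendsto_step [IsProbabilityMeasure γ] (S : Setup κ γ P F s v r) {c : ℝ} (hc : 0 ≤ c)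
    {g : E × Fin N → ℝ} (hg : LipC v c g) (i : Fin N) :
    Tendsto (fun n => (T κ)^[n + 1] g (0, i) - (T κ)^[n] g (0, i)) atTop (𝓝 0) := by
  obtain ⟨w, hw, hwb⟩ := S.osc hc hg
  obtain ⟨C, hC, hb⟩ := S.base_step
  have h1 : Tendsto (fun n => C * (r ^ n * c) + w n) atTop (𝓝 0) := by
    have := ((tendsto_pow_atTop_nhds_zero_of_lt_one S.r0 S.r1).mul_const c).const_mul C
    simpa using this.add hw
  refine squeeze_zero_norm (fun n => ?_) h1
  have h2 := hb _ (mul_nonneg (pow_nonneg S.r0 n) hc) _ (S.lip_iter hc hg n) i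
  rw [Function.iterate_succ_apply', Real.norm_eq_abs]
  have h3 : |∑ j, P i j * (T κ)^[n] g (0, j) - (T κ)^[n] g (0, i)| ≤ w n := by
    have e : ∑ j, P i j * (T κ)^[n] g (0, j) - (T κ)^[n] g (0, i)
        = ∑ j, P i j * ((T κ)^[n] g (0, j) - (T κ)^[n] g (0, i)) := by
      simp only [mul_sub, Finset.sum_sub_distrib, ← Finset.sum_mul, S.P1, one_mul]
    rw [e]
    calc _ ≤ ∑ j, |P i j * ((T κ)^[n] g (0, j) - (T κ)^[n] g (0, i))| := Finset.abs_sum_le_sum_abs _ _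
      _ ≤ ∑ j, P i j * w n := by
        refine Finset.sum_le_sum fun j _ => ?_
        rw [abs_mul, abs_of_pos (S.P0 i j)]
        exact mul_le_mul_of_nonneg_left (hwb n j i) (S.P0 i j).le
      _ = w n := by rw [← Finset.sum_mul, S.P1, one_mul]
  calc _ = |(T κ ((T κ)^[n] g) (0, i) - ∑ j, P i j * (T κ)^[n] g (0, j)) +
        (∑ j, P i j * (T κ)^[n] g (0, j) - (T κ)^[n] g (0, i))| := by congr 1; ring
    _ ≤ _ := (abs_add_le _ _).trans (add_le_add h2 h3)

lemma T_bdd {X : Type*} [MeasurableSpace X] (κ : Kernel X X) [IsMarkovKernel κ] {g : X → ℝ} {B : ℝ}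
    (hg : ∀ q, |g q| ≤ B) (q : X) : |T κ g q| ≤ B := by
  have := norm_integral_le_of_norm_le_const (μ := κ q) (f := g) (C := B)
    (Eventually.of_forall fun p => by simpa using hg p)
  simpa [T] using this

lemma T_iter_bdd {X : Type*} [MeasurableSpace X] (κ : Kernel X X) [IsMarkovKernel κ] {g : X → ℝ} {B : ℝ}
    (hg : ∀ q, |g q| ≤ B) (n : ℕ) : ∀ q : X, |(T κ)^[n] g q| ≤ B := by
  induction n with
  | zero => exact hg
  | succ n ih => rw [Function.iterate_succ_apply']; exact T_bdd κ ih

lemma integral_bind_T {X : Type*} [MeasurableSpace X] (κ : Kernel X X) (μ : Measure X)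
    {g : X → ℝ} (hg : Integrable g (μ.bind κ)) : ∫ q, g q ∂(μ.bind κ) = ∫ q, T κ g q ∂μ := by
  have h := Kernel.integral_comp (η := κ) (κ := Kernel.const Unit μ) (a := ()) (f := g)
    (by simpa [Kernel.comp_apply] using hg)
  simpa [Kernel.comp_apply, T] using h

lemma integrable_bdd {μ : Measure (E × Fin N)} [IsFiniteMeasure μ] {c B : ℝ} {g : E × Fin N → ℝ}
    (hg : LipC v c g) (hB : ∀ q, |g q| ≤ B) : Integrable g μ :=
  (integrable_const B).mono' hg.continuous.measurable.aestronglyMeasurable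
    (Eventually.of_forall fun q => by simpa using hB q)

lemma Setup.tendsto_invariant [IsProbabilityMeasure γ] [IsMarkovKernel κ] (S : Setup κ γ P F s v r)
    {μ : Measure (E × Fin N)} [IsProbabilityMeasure μ] (hμ : μ.bind κ = μ)
    {c B : ℝ} (hc : 0 ≤ c) {g : E × Fin N → ℝ} (hg : LipC v c g) (hB : ∀ q, |g q| ≤ B) (j : Fin N) :
    Tendsto (fun n => (T κ)^[n] g (0, j)) atTop (𝓝 (∫ q, g q ∂μ)) := by
  have h1 : ∀ n, ∫ q, (T κ)^[n] g q ∂μ = ∫ q, g q ∂μ := by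
    intro n
    induction n with
    | zero => rfl
    | succ n ih =>
      rw [Function.iterate_succ_apply', ← integral_bind_T, hμ, ih]
      rw [hμ]
      exact integrable_bdd (S.lip_iter hc hg n) (T_iter_bdd κ hB n)
  have h2 : Tendsto (fun n => ∫ q, ((T κ)^[n] g q - (T κ)^[n] g (0, j)) ∂μ) atTop
      (𝓝 (∫ _, (0 : ℝ) ∂μ)) := by
    refine tendsto_integral_of_dominated_convergence (fun _ => B + B) ?_ (integrable_const _) ?_ ?_
    · intro n
      exact ((S.lip_iter hc hg n).continuous.measurable.sub measurable_const).aestronglyMeasurable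
    · intro n
      refine Eventually.of_forall fun q => ?_
      rw [Real.norm_eq_abs]
      exact (abs_sub _ _).trans (add_le_add (T_iter_bdd κ hB n _) (T_iter_bdd κ hB n _))
    · exact Eventually.of_forall fun q => S.tendsto_diff hc hg q j
  have h3 : ∀ n, ∫ q, ((T κ)^[n] g q - (T κ)^[n] g (0, j)) ∂μ = ∫ q, g q ∂μ - (T κ)^[n] g (0, j) := by
    intro n
    rw [integral_sub (integrable_bdd (S.lip_iter hc hg n) (T_iter_bdd κ hB n)) (integrable_const _), h1]
    simp
  simp only [h3, integral_zero] at h2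
  have := h2.const_sub (∫ q, g q ∂μ)
  simpa using this

lemma Setup.unique [IsProbabilityMeasure γ] [IsMarkovKernel κ] (S : Setup κ γ P F s v r) (j : Fin N)
    {μ ν : Measure (E × Fin N)} [IsProbabilityMeasure μ] [IsProbabilityMeasure ν]
    (hμ : μ.bind κ = μ) (hν : ν.bind κ = ν) : μ = ν := by
  refine ext_of_lip S.v0 μ ν ?_
  rintro g ⟨c, hc, hg⟩ ⟨B, hB⟩
  exact tendsto_nhds_unique (S.tendsto_invariant hμ hc hg hB j) (S.tendsto_invariant hν hc hg hB j)

/-- The law after `n` steps. -/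
noncomputable def law {X : Type*} [MeasurableSpace X] (κ : Kernel X X) (p : X) : ℕ → Measure X
  | 0 => Measure.dirac p
  | n + 1 => (law κ p n).bind κ

instance {X : Type*} [MeasurableSpace X] (κ : Kernel X X) [IsMarkovKernel κ] (p : X) (n : ℕ) :
    IsProbabilityMeasure (law κ p n) := by
  induction n with
  | zero => unfold law; infer_instance
  | succ n ih => unfold law; infer_instance

lemma Setup.law_int [IsProbabilityMeasure γ] [IsMarkovKernel κ] (S : Setup κ γ P F s v r)
    (p : E × Fin N) (n : ℕ) : ∀ c, 0 ≤ c → ∀ g : E × Fin N → ℝ, LipC v c g →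
      Integrable g (law κ p n) ∧ ∫ q, g q ∂(law κ p n) = (T κ)^[n] g p := by
  induction n with
  | zero =>
    intro c hc g hg
    refine ⟨?_, ?_⟩
    · exact integrable_dirac (by simp)
    · exact integral_dirac _ _
  | succ n ih =>
    intro c hc g hg
    have hi : Integrable g ((law κ p n).bind κ) := by
      rw [Measure.integrable_comp_iff hg.continuous.measurable.aestronglyMeasurable]
      refine ⟨Eventually.of_forall fun q => S.integrable hg q, ?_⟩
      have habs : LipC v c (fun q => ‖g q‖) := by
        intro x y i
        exact (abs_abs_sub_abs_le (g (x, i)) (g (y, i))).trans (hg x y i)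
      exact (ih _ (mul_nonneg S.r0 hc) _ (S.lip_T hc habs)).1
    refine ⟨hi, ?_⟩
    change ∫ q, g q ∂((law κ p n).bind κ) = _
    rw [integral_bind_T κ _ hi, (ih _ (mul_nonneg S.r0 hc) _ (S.lip_T hc hg)).2,
      Function.iterate_succ_apply]

lemma Setup.lipV (S : Setup κ γ P F s v r) : LipC v 1 (fun q : E × Fin N => v q.2 * ‖q.1‖) := by
  intro x y i
  simp only
  rw [← mul_sub, abs_mul, abs_of_pos (S.v0 i), one_mul]
  exact mul_le_mul_of_nonneg_left (abs_norm_sub_norm_le x y) (S.v0 i).le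

lemma Setup.V_bdd [IsProbabilityMeasure γ] [IsMarkovKernel κ] (S : Setup κ γ P F s v r) :
    ∃ M, ∀ n i, (T κ)^[n] (fun q : E × Fin N => v q.2 * ‖q.1‖) (0, i) ≤ M := by
  obtain ⟨C, hC, hb⟩ := S.base_step
  refine ⟨C * (1 - r)⁻¹, fun n => ?_⟩
  have h : ∀ n i, (T κ)^[n] (fun q : E × Fin N => v q.2 * ‖q.1‖) (0, i) ≤ C * ∑ k ∈ Finset.range n, r ^ k := by
    intro n
    induction n with
    | zero => intro i; simp
    | succ n ih =>
      intro i
      rw [Function.iterate_succ_apply']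
      have h1 := hb _ (mul_nonneg (pow_nonneg S.r0 n) zero_le_one) _ (S.lip_iter zero_le_one S.lipV n) i
      have h2 := (abs_le.1 h1).2
      have h3 : ∑ j, P i j * (T κ)^[n] (fun q : E × Fin N => v q.2 * ‖q.1‖) (0, j)
          ≤ C * ∑ k ∈ Finset.range n, r ^ k := by
        calc _ ≤ ∑ j, P i j * (C * ∑ k ∈ Finset.range n, r ^ k) :=
              Finset.sum_le_sum fun j _ => mul_le_mul_of_nonneg_left (ih j) (S.P0 i j).le
          _ = _ := by rw [← Finset.sum_mul, S.P1, one_mul]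
      rw [Finset.sum_range_succ, mul_add]
      linarith
  intro i
  refine (h n i).trans ?_
  gcongr
  rw [← tsum_geometric_of_lt_one S.r0 S.r1]
  exact (summable_geometric_of_lt_one S.r0 S.r1).sum_le_tsum _ (fun k _ => pow_nonneg S.r0 k)

lemma Setup.tight [IsProbabilityMeasure γ] [IsMarkovKernel κ] (S : Setup κ γ P F s v r) (i : Fin N) :
    IsTightMeasureSet (Set.range fun n => law κ ((0 : E), i) n) := by
  rw [isTightMeasureSet_iff_exists_isCompact_measure_compl_le]
  intro ε hε
  haveI : Nonempty (Fin N) := ⟨i⟩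
  obtain ⟨M, hM⟩ := S.V_bdd
  obtain ⟨k, hk⟩ := Finite.exists_min v
  have hM0 : 0 ≤ M := by simpa using hM 0 i
  obtain ⟨e, he0, he⟩ : ∃ e : ℝ, 0 < e ∧ ENNReal.ofReal e ≤ ε := by
    rcases eq_or_ne ε ⊤ with rfl | h
    · exact ⟨1, one_pos, le_top⟩
    · exact ⟨ε.toReal, ENNReal.toReal_pos hε.ne' h, by rw [ENNReal.ofReal_toReal h]⟩
  set R := (M + 1) / e with hR
  have hR0 : 0 < R := by positivity
  refine ⟨Metric.closedBall 0 (R / v k) ×ˢ Set.univ, (isCompact_closedBall _ _).prod isCompact_univ, ?_⟩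
  rintro _ ⟨n, rfl⟩
  obtain ⟨hi, hintegral⟩ := S.law_int (0, i) n 1 zero_le_one _ S.lipV
  have hmk := mul_meas_ge_le_integral_of_nonneg (μ := law κ ((0 : E), i) n)
    (Eventually.of_forall fun q => mul_nonneg (S.v0 q.2).le (norm_nonneg q.1)) hi R
  rw [hintegral] at hmk
  have h1 := hmk.trans (hM n i)
  have h2 : (law κ ((0 : E), i) n).real {q | R ≤ v q.2 * ‖q.1‖} ≤ e := by
    rw [hR, div_mul_eq_mul_div, div_le_iff₀ he0] at h1
    by_contra hcon
    push Not at hcon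
    nlinarith
  have h3 : (Metric.closedBall (0 : E) (R / v k) ×ˢ (Set.univ : Set (Fin N)))ᶜ ⊆ {q | R ≤ v q.2 * ‖q.1‖} := by
    rintro ⟨x, j⟩ hx
    simp only [Set.mem_compl_iff, Set.mem_prod, Metric.mem_closedBall, dist_zero_right, Set.mem_univ,
      and_true, not_le] at hx
    rw [div_lt_iff₀ (S.v0 k)] at hx
    have := mul_le_mul_of_nonneg_right (hk j) (norm_nonneg x)
    simp only [Set.mem_ofPred_eq]
    linarith
  refine (measure_mono h3).trans (le_trans ?_ he)
  rw [← ENNReal.ofReal_toReal (measure_ne_top (law κ ((0 : E), i) n) _)]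
  exact ENNReal.ofReal_le_ofReal h2

lemma Setup.exists [IsProbabilityMeasure γ] [IsMarkovKernel κ] (S : Setup κ γ P F s v r) (i : Fin N) :
    ∃ μ : Measure (E × Fin N), IsProbabilityMeasure μ ∧ μ.bind κ = μ := by
  let μs : ℕ → ProbabilityMeasure (E × Fin N) := fun n => ⟨law κ ((0 : E), i) n, inferInstance⟩
  have hcomp : IsCompact (closure (Set.range μs)) := by
    apply isCompact_closure_of_isTightMeasureSet
    convert S.tight i using 1
    ext μ
    constructor
    · rintro ⟨_, ⟨n, rfl⟩, rfl⟩; exact ⟨n, rfl⟩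
    · rintro ⟨n, rfl⟩; exact ⟨_, ⟨n, rfl⟩, rfl⟩
  let U : Ultrafilter ℕ := Ultrafilter.of atTop
  have hU : (U : Filter ℕ) ≤ atTop := Ultrafilter.of_le _
  obtain ⟨μ, -, hμ⟩ := hcomp.ultrafilter_le_nhds (U.map μs) (by
    rw [le_principal_iff]
    exact Filter.mem_map.2 (Filter.univ_mem' fun n => subset_closure ⟨n, rfl⟩))
  have hlim : Tendsto μs U (𝓝 μ) := hμ
  rw [ProbabilityMeasure.tendsto_iff_forall_integral_tendsto] at hlim
  have hlim' : ∀ c B, 0 ≤ c → ∀ g : E × Fin N → ℝ, LipC v c g → (∀ q, |g q| ≤ B) →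
      Tendsto (fun n => (T κ)^[n] g (0, i)) U (𝓝 (∫ q, g q ∂(μ : Measure (E × Fin N)))) := by
    intro c B hc g hg hB
    have := hlim (BoundedContinuousFunction.ofNormedAddCommGroup g hg.continuous B
      (fun q => by simpa using hB q))
    refine this.congr fun n => ?_
    exact (S.law_int (0, i) n c hc g hg).2
  refine ⟨μ, inferInstance, ?_⟩
  refine ext_of_lip S.v0 _ _ ?_
  rintro g ⟨c, hc, hg⟩ ⟨B, hB⟩
  rw [integral_bind_T κ _ (integrable_bdd hg hB)]
  have h1 := hlim' c B hc g hg hB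
  have h2 := hlim' _ B (mul_nonneg S.r0 hc) _ (S.lip_T hc hg) (T_bdd κ hB)
  have h3 := (S.tendsto_step hc hg i).mono_left hU
  have h4 := h3.add h1
  simp only [sub_add_cancel, zero_add] at h4
  exact tendsto_nhds_unique h2 (h4.congr fun n => by rw [Function.iterate_succ_apply])

end

end EMAux

/-! ### Matrix exponential and spectral estimates -/

namespace EMAux

open Filter Topology

lemma hasSum_matExp {N : ℕ} (M : Matrix (Fin N) (Fin N) ℝ) :
    HasSum (fun k : ℕ => ((k.factorial : ℝ)⁻¹) • M ^ k) (matExp M) := by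
  letI : NormedRing (Matrix (Fin N) (Fin N) ℝ) := Matrix.linftyOpNormedRing
  letI : NormedAlgebra ℝ (Matrix (Fin N) (Fin N) ℝ) := Matrix.linftyOpNormedAlgebra
  exact (NormedSpace.expSeries_summable' (𝕂 := ℝ) M).hasSum

lemma matExp_eq {N : ℕ} (M : Matrix (Fin N) (Fin N) ℝ) : matExp M = NormedSpace.exp M := by
  rw [NormedSpace.exp_eq_tsum ℝ]; rfl

lemma hasSum_matExp_entry {N : ℕ} (M : Matrix (Fin N) (Fin N) ℝ) (i j : Fin N) :
    HasSum (fun k : ℕ => ((k.factorial : ℝ)⁻¹) * (M ^ k) i j) (matExp M i j) := by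
  have h := Pi.hasSum.1 (Pi.hasSum.1 (hasSum_matExp M) i) j
  exact h

lemma hasSum_matExp_vec {N : ℕ} (M : Matrix (Fin N) (Fin N) ℝ) (g : Fin N → ℝ) (i : Fin N) :
    HasSum (fun k : ℕ => ((k.factorial : ℝ)⁻¹) * ∑ j, (M ^ k) i j * g j) (∑ j, matExp M i j * g j) := by
  have h := hasSum_sum (s := Finset.univ) (fun j _ => (hasSum_matExp_entry M i j).mul_right (g j))
  refine h.congr_fun ?_ |> fun h => h
  intro k
  rw [Finset.mul_sum]
  exact Finset.sum_congr rfl fun j _ => by ring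

lemma pow_vec {N : ℕ} (M : Matrix (Fin N) (Fin N) ℝ) (g : Fin N → ℝ) (k : ℕ) (i : Fin N) :
    ∑ j, (M ^ (k + 1)) i j * g j = ∑ j, M i j * ∑ l, (M ^ k) j l * g l := by
  rw [pow_succ']
  simp only [Matrix.mul_apply, Finset.sum_mul, Finset.mul_sum]
  rw [Finset.sum_comm]
  exact Finset.sum_congr rfl fun j _ => Finset.sum_congr rfl fun l _ => by ring

lemma pow_vec' {N : ℕ} (M : Matrix (Fin N) (Fin N) ℝ) (g : Fin N → ℝ) (k : ℕ) (i : Fin N) :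
    ∑ j, (M ^ (k + 1)) i j * g j = ∑ j, (M ^ k) i j * ∑ l, M j l * g l := by
  rw [pow_succ]
  simp only [Matrix.mul_apply, Finset.sum_mul, Finset.mul_sum]
  rw [Finset.sum_comm]
  exact Finset.sum_congr rfl fun j _ => Finset.sum_congr rfl fun l _ => by ring

lemma matExp_row {N : ℕ} (M : Matrix (Fin N) (Fin N) ℝ) (hM : ∀ i, ∑ j, M i j = 0) (i : Fin N) :
    ∑ j, matExp M i j = 1 := by
  have h := hasSum_matExp_vec M (fun _ => 1) i
  have h0 : ∀ k : ℕ, k ≠ 0 → ((k.factorial : ℝ)⁻¹) * ∑ j, (M ^ k) i j * (1 : ℝ) = 0 := by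
    intro k hk
    obtain ⟨k, rfl⟩ := Nat.exists_eq_succ_of_ne_zero hk
    rw [Nat.succ_eq_add_one, pow_vec']
    simp [hM]
  have h2 := h.unique (hasSum_single 0 h0)
  simpa [Matrix.one_apply] using h2

lemma pow_nonneg_entry {N : ℕ} {B : Matrix (Fin N) (Fin N) ℝ} (hB : ∀ i j, 0 ≤ B i j) (k : ℕ) :
    ∀ i j, 0 ≤ (B ^ k) i j := by
  induction k with
  | zero => intro i j; rw [pow_zero, Matrix.one_apply]; split_ifs <;> norm_num
  | succ k ih =>
    intro i j
    rw [pow_succ, Matrix.mul_apply]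
    exact Finset.sum_nonneg fun l _ => mul_nonneg (ih i l) (hB l j)

lemma pow_pos_path {N : ℕ} {B : Matrix (Fin N) (Fin N) ℝ} (hB : ∀ i j, 0 ≤ B i j) (c : ℕ → Fin N)
    (k : ℕ) (hc : ∀ l < k, 0 < B (c l) (c (l + 1))) : 0 < (B ^ k) (c 0) (c k) := by
  induction k with
  | zero => simp
  | succ k ih =>
    rw [pow_succ, Matrix.mul_apply]
    refine Finset.sum_pos' (fun l _ => mul_nonneg (pow_nonneg_entry hB k _ _) (hB _ _))
      ⟨c k, Finset.mem_univ _, ?_⟩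
    exact mul_pos (ih fun l hl => hc l (by omega)) (hc k (by omega))

lemma matExp_pos {N : ℕ} {Q : Matrix (Fin N) (Fin N) ℝ} (hQ : IsConservativeQMatrix Q)
    (hirr : MatrixIrreducible Q) {δ q₀ : ℝ} (hδ : 0 < δ) (hq : ∀ i, -Q i i ≤ q₀) (i j : Fin N) :
    0 < matExp (δ • Q) i j := by
  have hq0 : ∀ i, 0 ≤ Q i i + q₀ := fun i => by linarith [hq i]
  set B : Matrix (Fin N) (Fin N) ℝ := δ • Q + (δ * q₀) • (1 : Matrix (Fin N) (Fin N) ℝ) with hBdef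
  have hBent : ∀ i j, B i j = δ * Q i j + δ * q₀ * (if i = j then 1 else 0) := by
    intro i j; simp [hBdef, Matrix.one_apply]
  have hB : ∀ i j, 0 ≤ B i j := by
    intro i j
    rw [hBent]
    split_ifs with h
    · subst h; nlinarith [hq0 i]
    · have := hQ.1 i j h
      simp only [mul_zero, add_zero]; positivity
  have hexp : matExp (δ • Q) = Real.exp (-(δ * q₀)) • matExp B := by
    have e1 : δ • Q = algebraMap ℝ (Matrix (Fin N) (Fin N) ℝ) (-(δ * q₀)) + B := by
      rw [hBdef, Algebra.algebraMap_eq_smul_one]; module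
    have e2 : Commute (algebraMap ℝ (Matrix (Fin N) (Fin N) ℝ) (-(δ * q₀))) B :=
      Algebra.commutes _ _
    rw [matExp_eq, matExp_eq, e1, Matrix.exp_add_of_commute _ _ e2, Algebra.smul_def]
    congr 1
    rw [Real.exp_eq_exp_ℝ]
    letI : NormedRing (Matrix (Fin N) (Fin N) ℝ) := Matrix.linftyOpNormedRing
    letI : NormedAlgebra ℝ (Matrix (Fin N) (Fin N) ℝ) := Matrix.linftyOpNormedAlgebra
    exact (NormedSpace.algebraMap_exp_comm _).symm
  rw [hexp, Matrix.smul_apply, smul_eq_mul]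
  refine mul_pos (Real.exp_pos _) ?_
  have hk : ∃ k : ℕ, 0 < (B ^ k) i j := by
    by_cases h : i = j
    · subst h; exact ⟨0, by simp⟩
    · obtain ⟨k, c, h0, h1, hc⟩ := hirr i j h
      refine ⟨k, ?_⟩
      rw [← h0, ← h1]
      refine pow_pos_path hB c k fun l hl => ?_
      by_cases hcc : c l = c (l + 1)
      · exfalso
        have h5 := hc l hl
        rw [← hcc] at h5
        have h2 := hQ.2 (c l)
        rw [← Finset.add_sum_erase _ _ (Finset.mem_univ (c l))] at h2
        have h4 : 0 ≤ ∑ j ∈ Finset.univ.erase (c l), Q (c l) j :=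
          Finset.sum_nonneg fun j hj => hQ.1 _ j (Finset.ne_of_mem_erase hj).symm
        linarith
      · rw [hBent, if_neg hcc]
        have := hc l hl
        simp only [mul_zero, add_zero]; positivity
  obtain ⟨k, hk⟩ := hk
  have hs := hasSum_matExp_entry B i j
  have h1 := hs.summable.le_tsum k (fun l _ => mul_nonneg (by positivity) (pow_nonneg_entry hB l i j))
  rw [hs.tsum_eq] at h1
  refine lt_of_lt_of_le ?_ h1
  positivity

lemma Q_bound {N : ℕ} {Q : Matrix (Fin N) (Fin N) ℝ} (hQ : IsConservativeQMatrix Q)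
    {q₀ : ℝ} (hq : ∀ i, -Q i i ≤ q₀) {h : Fin N → ℝ} {G : ℝ} (hG : ∀ i, |h i| ≤ G) (i : Fin N) :
    |∑ j, Q i j * h j| ≤ 2 * q₀ * G := by
  have hG0 : 0 ≤ G := (abs_nonneg _).trans (hG i)
  have h1 : ∑ j, |Q i j| = 2 * (-Q i i) := by
    have h2 := hQ.2 i
    rw [← Finset.add_sum_erase _ _ (Finset.mem_univ i)] at h2 ⊢
    have h3 : ∑ j ∈ Finset.univ.erase i, |Q i j| = ∑ j ∈ Finset.univ.erase i, Q i j :=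
      Finset.sum_congr rfl fun j hj => abs_of_nonneg (hQ.1 i j (Finset.ne_of_mem_erase hj).symm)
    have h4 : 0 ≤ ∑ j ∈ Finset.univ.erase i, Q i j :=
      Finset.sum_nonneg fun j hj => hQ.1 i j (Finset.ne_of_mem_erase hj).symm
    rw [h3, abs_of_nonpos (by linarith)]; linarith
  calc |∑ j, Q i j * h j| ≤ ∑ j, |Q i j * h j| := Finset.abs_sum_le_sum_abs _ _
    _ ≤ ∑ j, |Q i j| * G := Finset.sum_le_sum fun j _ => by
        rw [abs_mul]; exact mul_le_mul_of_nonneg_left (hG j) (abs_nonneg _)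
    _ = 2 * (-Q i i) * G := by rw [← Finset.sum_mul, h1]
    _ ≤ 2 * q₀ * G := by gcongr; exact hq i

lemma taylor {N : ℕ} {Q : Matrix (Fin N) (Fin N) ℝ} (hQ : IsConservativeQMatrix Q)
    {δ q₀ : ℝ} (hδ : 0 < δ) (hq : ∀ i, -Q i i ≤ q₀) (hq0 : 0 ≤ q₀) (hδq : 2 * q₀ * δ < 1)
    {g : Fin N → ℝ} {G : ℝ} (hG : ∀ i, |∑ j, Q i j * ∑ k, Q j k * g k| ≤ G) (i : Fin N) :
    |∑ j, matExp (δ • Q) i j * g j - (g i + δ * ∑ j, Q i j * g j)|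
      ≤ 1 / 2 * δ ^ 2 * G * (1 - 2 * q₀ * δ)⁻¹ := by
  have hG0 : 0 ≤ G := (abs_nonneg _).trans (hG i)
  have hQk : ∀ k : ℕ, ∀ i, |∑ j, (Q ^ (k + 2)) i j * g j| ≤ (2 * q₀) ^ k * G := by
    intro k
    induction k with
    | zero =>
      intro i
      rw [pow_zero, one_mul, zero_add, show (2 : ℕ) = 1 + 1 from rfl, pow_vec]
      simpa using hG i
    | succ k ih =>
      intro i
      rw [show k + 1 + 2 = (k + 2) + 1 by ring, pow_vec]
      refine (Q_bound hQ hq ih i).trans (le_of_eq ?_)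
      ring
  have hs := (hasSum_nat_add_iff' 2).2 (hasSum_matExp_vec (δ • Q) g i)
  have e : ∑ k ∈ Finset.range 2, ((k.factorial : ℝ)⁻¹) * ∑ j, ((δ • Q) ^ k) i j * g j
      = g i + δ * ∑ j, Q i j * g j := by
    rw [Finset.sum_range_succ, Finset.sum_range_one]
    simp [Matrix.one_apply, Finset.mul_sum, mul_assoc]
  rw [e] at hs
  have hgeo := (hasSum_geometric_of_lt_one (r := 2 * q₀ * δ) (by positivity) hδq).mul_left
    (1 / 2 * δ ^ 2 * G)
  refine hs.norm_le_of_bounded hgeo ?_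
  intro k
  have e2 : ∑ j, ((δ • Q) ^ (k + 2)) i j * g j = δ ^ (k + 2) * ∑ j, (Q ^ (k + 2)) i j * g j := by
    rw [smul_pow, Finset.mul_sum]
    exact Finset.sum_congr rfl fun j _ => by rw [Matrix.smul_apply, smul_eq_mul, mul_assoc]
  rw [e2, Real.norm_eq_abs, abs_mul, abs_mul, abs_of_pos (pow_pos hδ _), abs_of_nonneg (by positivity)]
  have hf : (((k + 2).factorial : ℝ))⁻¹ ≤ 1 / 2 := by
    rw [one_div]
    apply inv_anti₀ (by norm_num)
    have : 2 ≤ (k + 2).factorial := by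
      calc 2 = Nat.factorial 2 := rfl
        _ ≤ _ := Nat.factorial_le (by omega)
    exact_mod_cast this
  calc _ ≤ 1 / 2 * (δ ^ (k + 2) * ((2 * q₀) ^ k * G)) := by
        gcongr; exact hQk k i
    _ = _ := by rw [mul_pow]; ring

lemma Dform_eq {N : ℕ} {π : Fin N → ℝ} {Q : Matrix (Fin N) (Fin N) ℝ} {β : Fin N → ℝ}
    (hQ : IsConservativeQMatrix Q) (hrev : ∀ i j, π i * Q i j = π j * Q j i) (f : Fin N → ℝ) :
    Dform π Q β f = - ∑ i, ∑ j, π i * Q i j * f j * f i - ∑ i, π i * β i * f i ^ 2 := by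
  have h1 : ∑ i, ∑ j, π i * Q i j * f i ^ 2 = 0 := by
    refine Finset.sum_eq_zero fun i _ => ?_
    have : ∑ j, π i * Q i j * f i ^ 2 = π i * f i ^ 2 * ∑ j, Q i j := by
      rw [Finset.mul_sum]; exact Finset.sum_congr rfl fun j _ => by ring
    rw [this, hQ.2, mul_zero]
  have h2 : ∑ i, ∑ j, π i * Q i j * f j ^ 2 = 0 := by
    rw [Finset.sum_comm, ← h1]
    exact Finset.sum_congr rfl fun i _ => Finset.sum_congr rfl fun j _ => by rw [hrev j i]
  have h3 : ∑ i, ∑ j, π i * Q i j * (f j - f i) ^ 2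
      = ∑ i, ∑ j, π i * Q i j * f j ^ 2 + ∑ i, ∑ j, π i * Q i j * f i ^ 2
        - 2 * ∑ i, ∑ j, π i * Q i j * f j * f i := by
    simp only [Finset.mul_sum, ← Finset.sum_add_distrib, ← Finset.sum_sub_distrib]
    exact Finset.sum_congr rfl fun i _ => Finset.sum_congr rfl fun j _ => by ring
  unfold Dform
  rw [h3, h1, h2]; ring

lemma euler_lagrange {N : ℕ} {π : Fin N → ℝ} {Q : Matrix (Fin N) (Fin N) ℝ} {β : Fin N → ℝ}
    (hQ : IsConservativeQMatrix Q) (hrev : ∀ i j, π i * Q i j = π j * Q j i)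
    (hπ : ∀ i, 0 < π i) {lam : ℝ}
    (hinf : ∀ f : Fin N → ℝ, ∑ i, π i * f i ^ 2 = 1 → lam ≤ Dform π Q β f)
    {ξ : Fin N → ℝ} (hn : ∑ i, π i * ξ i ^ 2 = 1) (hmin : Dform π Q β ξ = lam) (i : Fin N) :
    ∑ j, Q i j * ξ j = -(lam + β i) * ξ i := by
  have hpos : ∀ f : Fin N → ℝ, 0 ≤ Dform π Q β f - lam * ∑ i, π i * f i ^ 2 := by
    intro f
    have hc0 : 0 ≤ ∑ i, π i * f i ^ 2 :=
      Finset.sum_nonneg fun i _ => mul_nonneg (hπ i).le (sq_nonneg _)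
    rcases hc0.eq_or_lt with h0 | h0
    · have hf : ∀ i, f i = 0 := by
        intro i
        have := (Finset.sum_eq_zero_iff_of_nonneg
          (fun i _ => mul_nonneg (hπ i).le (sq_nonneg (f i)))).1 h0.symm i (Finset.mem_univ i)
        have h2 := (mul_eq_zero.1 this).resolve_left (hπ i).ne'
        exact pow_eq_zero_iff (two_ne_zero) |>.1 h2
      rw [← h0]
      simp [Dform, hf]
    · set C := ∑ i, π i * f i ^ 2 with hC
      set a := (Real.sqrt C)⁻¹ with ha
      have ha2 : a ^ 2 = C⁻¹ := by rw [ha, inv_pow, Real.sq_sqrt hc0]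
      have hn2 : ∑ i, π i * (a * f i) ^ 2 = 1 := by
        have : ∑ i, π i * (a * f i) ^ 2 = a ^ 2 * C := by
          rw [hC, Finset.mul_sum]; exact Finset.sum_congr rfl fun i _ => by ring
        rw [this, ha2, inv_mul_cancel₀ h0.ne']
      have h1 := hinf (fun i => a * f i) hn2
      have h2 : Dform π Q β (fun i => a * f i) = a ^ 2 * Dform π Q β f := by
        unfold Dform
        simp only [mul_sub, Finset.mul_sum]
        congr 1
        · exact Finset.sum_congr rfl fun i _ => Finset.sum_congr rfl fun j _ => by ring
        · exact Finset.sum_congr rfl fun i _ => by ring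
      rw [h2, ha2, inv_mul_eq_div, le_div_iff₀ h0] at h1
      linarith
  set w : Fin N → ℝ := fun i => ∑ j, Q i j * ξ j + (lam + β i) * ξ i with hw
  have hB : ∀ f : Fin N → ℝ, Dform π Q β f - lam * ∑ i, π i * f i ^ 2
      = - ∑ i, π i * f i * (∑ j, Q i j * f j + (lam + β i) * f i) := by
    intro f
    rw [Dform_eq hQ hrev]
    have h1 : ∑ i, ∑ j, π i * Q i j * f j * f i = ∑ i, π i * f i * ∑ j, Q i j * f j := by
      refine Finset.sum_congr rfl fun i _ => ?_
      rw [Finset.mul_sum]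
      exact Finset.sum_congr rfl fun j _ => by ring
    have h2 : ∑ i, π i * f i * (∑ j, Q i j * f j + (lam + β i) * f i)
        = ∑ i, π i * f i * ∑ j, Q i j * f j + ∑ i, π i * β i * f i ^ 2
          + lam * ∑ i, π i * f i ^ 2 := by
      rw [Finset.mul_sum (a := lam), ← Finset.sum_add_distrib, ← Finset.sum_add_distrib]
      exact Finset.sum_congr rfl fun i _ => by ring
    rw [h1, h2]; ring
  have hξ0 : ∑ i, π i * ξ i * w i = 0 := by
    have := hB ξ
    rw [hn, hmin] at this
    simp only [hw]; linarith
  set A := ∑ i, π i * w i ^ 2 with hA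
  set C := ∑ i, π i * w i * (∑ j, Q i j * w j + (lam + β i) * w i) with hC
  have hcross : ∑ i, π i * ξ i * (∑ j, Q i j * w j + (lam + β i) * w i) = A := by
    have h1 : ∑ i, π i * ξ i * ∑ j, Q i j * w j = ∑ i, π i * w i * ∑ j, Q i j * ξ j := by
      simp only [Finset.mul_sum]
      rw [Finset.sum_comm]
      refine Finset.sum_congr rfl fun i _ => Finset.sum_congr rfl fun j _ => ?_
      have := hrev i j
      linear_combination (-ξ j * w i) * this
    simp only [mul_add, Finset.sum_add_distrib, h1]
    rw [← Finset.sum_add_distrib, hA]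
    refine Finset.sum_congr rfl fun i _ => ?_
    have : w i = ∑ j, Q i j * ξ j + (lam + β i) * ξ i := rfl
    linear_combination (-(π i * w i)) * this
  have hquad : ∀ t : ℝ, 2 * t * A + t ^ 2 * C ≤ 0 := by
    intro t
    have h1 := hpos (fun i => ξ i + t * w i)
    rw [hB] at h1
    have h2 : ∑ i, π i * (ξ i + t * w i) * (∑ j, Q i j * (ξ j + t * w j)
        + (lam + β i) * (ξ i + t * w i)) = ∑ i, π i * ξ i * w i
        + t * A + t * A + t ^ 2 * C := by
      nth_rewrite 1 [← hcross]
      rw [hA, hC]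
      simp only [Finset.mul_sum (a := t), Finset.mul_sum (a := t ^ 2), ← Finset.sum_add_distrib]
      refine Finset.sum_congr rfl fun i _ => ?_
      have e1 : w i = ∑ j, Q i j * ξ j + (lam + β i) * ξ i := rfl
      have e2 : ∑ j, Q i j * (ξ j + t * w j) = ∑ j, Q i j * ξ j + t * ∑ j, Q i j * w j := by
        rw [Finset.mul_sum, ← Finset.sum_add_distrib]
        exact Finset.sum_congr rfl fun j _ => by ring
      rw [e2]
      linear_combination (-(π i * ξ i) - t * π i * w i) * e1
    rw [h2, hξ0] at h1
    linarith
  have hA0 : A ≤ 0 := by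
    by_contra hcon
    push Not at hcon
    have hC1 : 0 < |C| + 1 := by positivity
    have ht : 0 < A / (|C| + 1) := div_pos hcon hC1
    have h1 := hquad (A / (|C| + 1))
    have h2 : A / (|C| + 1) * (|C| + 1) = A := div_mul_cancel₀ _ hC1.ne'
    set t := A / (|C| + 1)
    have h3 : 2 * A + t * C ≤ 0 := by
      by_contra h4
      push Not at h4
      nlinarith
    have h5 := neg_abs_le C
    nlinarith
  have hwi : π i * w i ^ 2 ≤ 0 :=
    (Finset.single_le_sum (f := fun i => π i * w i ^ 2)
      (fun i _ => mul_nonneg (hπ i).le (sq_nonneg _)) (Finset.mem_univ i)).trans hA0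
  have hw0 : w i = 0 := by
    have : w i ^ 2 ≤ 0 := by
      by_contra h; push Not at h; nlinarith [mul_pos (hπ i) h]
    exact pow_eq_zero_iff two_ne_zero |>.1 (le_antisymm this (sq_nonneg _))
  have : ∑ j, Q i j * ξ j + (lam + β i) * ξ i = 0 := hw0
  linarith

set_option maxHeartbeats 2000000 in
/-- The scalar inequality behind the contraction. -/
lemma scalar_key {t L lam b q₀ β₀ M : ℝ} (ht0 : 0 < t) (ht1 : t < 1) (hL : 0 < L)
    (htL : 32 * L ^ 2 * t ^ 2 < 1) (hlam : 0 < lam) (hlamβ : lam ≤ β₀) (hlamL : lam ≤ 2 * L)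
    (hbL : -(2 * L) ≤ b) (hbq : b ≤ q₀) (hbβ : |b| ≤ β₀) (hM : 1 ≤ M) (hq0 : 0 ≤ q₀)
    (hκ : t * (((1 + 12 * q₀) * β₀ + 8 * L ^ 2 * (5 + 6 * β₀)) * M) < lam) :
    0 ≤ 1 + t ^ 2 * b + (t ^ 2) ^ 2 * L ^ 2 ∧
    (1 + t ^ 2 * b + (t ^ 2) ^ 2 * L ^ 2) *
      (1 - t ^ 2 * (lam + b) + 12 / 5 * (t ^ 2) ^ 2 * q₀ * β₀ * M) < 1 := by
  have hβ0 : 0 < β₀ := hlam.trans_le hlamβ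
  have hM0 : 0 < M := by linarith
  have hL2 : 0 < L ^ 2 := by positivity
  have hu : t * L ≤ 9 / 50 := by
    by_contra h
    push Not at h
    nlinarith
  have hδL : t ^ 2 * L ≤ 9 / 50 := by nlinarith [mul_pos ht0 hL]
  have k1 : 12 * (t * (q₀ * β₀ * M)) ≤ lam := by
    have : 0 ≤ t * (β₀ * M) + t * (8 * L ^ 2 * (5 + 6 * β₀) * M) := by positivity
    nlinarith
  have k2 : 40 * (t * L ^ 2) ≤ lam := by
    have h1 : 0 ≤ t * ((1 + 12 * q₀) * β₀ * M) + t * (48 * L ^ 2 * β₀ * M) := by positivity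
    have h2 : t * (40 * L ^ 2 * M) ≤ lam := by nlinarith
    have h3 : 0 ≤ t * (40 * L ^ 2) * (M - 1) := mul_nonneg (by positivity) (by linarith)
    nlinarith
  have k3 : 48 * (t * L ^ 2 * β₀) ≤ lam := by
    have h1 : 0 ≤ t * ((1 + 12 * q₀) * β₀ * M) + t * (40 * L ^ 2 * M) := by positivity
    have h2 : t * (48 * L ^ 2 * β₀ * M) ≤ lam := by nlinarith
    have h3 : 0 ≤ t * (48 * L ^ 2 * β₀) * (M - 1) := mul_nonneg (by positivity) (by linarith)
    nlinarith
  have k4 : 12 * (t * q₀) ≤ 1 := by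
    have h1 : 12 * (t * (q₀ * β₀ * M)) ≤ β₀ := k1.trans hlamβ
    have h2 : 0 ≤ t * q₀ * β₀ * (M - 1) := mul_nonneg (by positivity) (by linarith)
    have h3 : β₀ * (12 * (t * q₀)) ≤ β₀ * 1 := by nlinarith
    exact le_of_mul_le_mul_left h3 hβ0
  have ht2 : 0 < t ^ 2 := by positivity
  have ht21 : t ^ 2 ≤ t := by nlinarith
  have ht22 : t ^ 2 ≤ 1 := by nlinarith
  set d := t ^ 2 with hd
  have kd : d * q₀ ≤ 1 / 12 := by
    have := mul_le_mul_of_nonneg_right ht21 hq0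
    linarith
  have kdL : d * L ^ 2 ≤ 1 / 32 := by linarith
  have kddL : d ^ 2 * L ^ 2 ≤ 1 / 32 := by
    have h1 : d * (d * L ^ 2) ≤ 1 * (1 / 32) := mul_le_mul ht22 kdL (by positivity) (by norm_num)
    have h2 : d ^ 2 * L ^ 2 = d * (d * L ^ 2) := by ring
    linarith
  set a := 1 + d * b + d ^ 2 * L ^ 2 with ha
  have hdL2 : 0 ≤ d ^ 2 * L ^ 2 := by positivity
  have ha0 : 0 ≤ a := by
    have := mul_le_mul_of_nonneg_left hbL ht2.le
    linarith
  have ha1 : a ≤ 6 / 5 := by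
    have : d * b ≤ d * q₀ := by gcongr
    linarith
  refine ⟨ha0, ?_⟩
  -- remainder term
  have r1 : 12 / 5 * d ^ 2 * q₀ * β₀ * M ≤ 1 / 5 * (d * lam) := by
    have h1 : t * (12 * (t * (q₀ * β₀ * M))) ≤ 1 * lam :=
      mul_le_mul ht1.le k1 (by positivity) (by norm_num)
    have h2 := mul_le_mul_of_nonneg_left h1 ht2.le
    have e : 12 / 5 * d ^ 2 * q₀ * β₀ * M = 1 / 5 * (d * (t * (12 * (t * (q₀ * β₀ * M))))) := by
      rw [hd]; ring
    rw [e]; linarith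
  have r2 : a * (12 / 5 * d ^ 2 * q₀ * β₀ * M) ≤ 6 / 25 * (d * lam) := by
    have h0 : 0 ≤ 12 / 5 * d ^ 2 * q₀ * β₀ * M := by positivity
    calc a * (12 / 5 * d ^ 2 * q₀ * β₀ * M) ≤ 6 / 5 * (1 / 5 * (d * lam)) :=
          mul_le_mul ha1 r1 h0 (by norm_num)
      _ = _ := by ring
  have e1 : d * L ^ 2 ≤ lam / 40 := by
    have := mul_le_mul_of_nonneg_right ht21 hL2.le
    linarith
  have e2 : -(d * (b * (lam + b))) ≤ 9 / 100 * lam := by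
    have h1 : -(b * (lam + b)) ≤ lam ^ 2 / 4 := by nlinarith [sq_nonneg (b + lam / 2)]
    have h2 : lam ^ 2 / 4 ≤ lam * L / 2 := by nlinarith
    have h3 := mul_le_mul_of_nonneg_left (h1.trans h2) ht2.le
    have h4 := mul_le_mul_of_nonneg_right hδL hlam.le
    linarith
  have e3 : -(d ^ 2 * L ^ 2 * (lam + b)) ≤ lam / 48 := by
    have h1 : -(lam + b) ≤ β₀ := by linarith [neg_abs_le b]
    have h2 : d ^ 2 * L ^ 2 * (-(lam + b)) ≤ d ^ 2 * L ^ 2 * β₀ := mul_le_mul_of_nonneg_left h1 hdL2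
    have h3 : d ^ 2 ≤ t := by
      have := mul_le_mul_of_nonneg_left ht22 ht2.le
      linarith [sq d]
    have h4 : d ^ 2 * (L ^ 2 * β₀) ≤ t * (L ^ 2 * β₀) := by gcongr
    linarith
  have e4 : d * (d * L ^ 2 - d * (b * (lam + b)) - d ^ 2 * L ^ 2 * (lam + b)) ≤ d * (lam / 40 + 9 / 100 * lam + lam / 48) := by
    apply mul_le_mul_of_nonneg_left _ ht2.le
    linarith
  have e5 : a * (1 - d * (lam + b)) = 1 - d * lam + d * (d * L ^ 2 - d * (b * (lam + b)) - d ^ 2 * L ^ 2 * (lam + b)) := by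
    rw [ha]; ring
  have hdl : 0 < d * lam := by positivity
  have e6 : a * (1 - d * (lam + b) + 12 / 5 * d ^ 2 * q₀ * β₀ * M)
      = a * (1 - d * (lam + b)) + a * (12 / 5 * d ^ 2 * q₀ * β₀ * M) := by ring
  rw [e6, e5]
  linarith

end EMAux

/-! ### Contraction estimate -/

namespace EMAux

lemma Q_diag_nonpos {N : ℕ} {Q : Matrix (Fin N) (Fin N) ℝ} (hQ : IsConservativeQMatrix Q)
    (i : Fin N) : Q i i ≤ 0 := by
  have h2 := hQ.2 i
  rw [← Finset.add_sum_erase _ _ (Finset.mem_univ i)] at h2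
  have h4 : 0 ≤ ∑ j ∈ Finset.univ.erase i, Q i j :=
    Finset.sum_nonneg fun j hj => hQ.1 _ j (Finset.ne_of_mem_erase hj).symm
  linarith

lemma step_consts {L lam κ δ : ℝ} (hL : 0 ≤ L) (hlam : 0 < lam) (hκ0 : 0 ≤ κ) (hδ0 : 0 < δ)
    (hδ : δ < min (1 / (32 * L ^ 2)) ((lam / κ) ^ 2)) :
    0 < L ∧ 32 * L ^ 2 * δ < 1 ∧ Real.sqrt δ * κ < lam := by
  obtain ⟨h1, h2⟩ := lt_min_iff.1 hδ
  have hLpos : 0 < L := by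
    rcases hL.eq_or_lt with h | h
    · rw [← h] at h1; norm_num at h1; linarith
    · exact h
  have hκpos : 0 < κ := by
    rcases hκ0.eq_or_lt with h | h
    · rw [← h] at h2; norm_num at h2; linarith
    · exact h
  refine ⟨hLpos, ?_, ?_⟩
  · rw [lt_div_iff₀ (by positivity)] at h1; linarith
  · rw [← lt_div_iff₀ hκpos]
    exact (Real.sqrt_lt' (by positivity)).2 h2

lemma contraction {N : ℕ} {Q : Matrix (Fin N) (Fin N) ℝ}
    (hQ : IsConservativeQMatrix Q) {L : ℝ} (hL : 0 ≤ L) {β : Fin N → ℝ}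
    (hβL : ∀ i, -(2 * L) ≤ β i)
    {π : Fin N → ℝ} (hπpos : ∀ i, 0 < π i)
    (hrev : ∀ i j, π i * Q i j = π j * Q j i)
    {lam₀ : ℝ}
    (hlam₀inf : ∀ f : Fin N → ℝ, ∑ i, π i * f i ^ 2 = 1 → lam₀ ≤ Dform π Q β f)
    (hlam₀pos : 0 < lam₀)
    {ξ : Fin N → ℝ} (hξnorm : ∑ i, π i * ξ i ^ 2 = 1) (hξpos : ∀ i, 0 < ξ i)
    (hξmin : Dform π Q β ξ = lam₀)
    {ξone ξtwo β₀ q₀ κ : ℝ}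
    (hξone : IsGreatest (Set.range ξ) ξone)
    (hξtwo : IsLeast (Set.range ξ) ξtwo⁻¹)
    (hβ₀ : IsGreatest (Set.range fun i => |β i|) β₀)
    (hq₀ : IsGreatest (Set.range fun i => -Q i i) q₀)
    (hκ : κ = ((1 + 12 * q₀) * β₀ + 8 * L ^ 2 * (5 + 6 * β₀)) * ξone * ξtwo)
    {δ : ℝ} (hδ0 : 0 < δ) (hδ1 : δ < 1)
    (hδ : δ < min (1 / (32 * L ^ 2)) ((lam₀ / κ) ^ 2)) (i : Fin N) :
    0 ≤ 1 + δ * β i + δ ^ 2 * L ^ 2 ∧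
      (1 + δ * β i + δ ^ 2 * L ^ 2) * ∑ j, matExp (δ • Q) i j * ξ j < ξ i := by
  have hq : ∀ i, -Q i i ≤ q₀ := fun i => hq₀.2 ⟨i, rfl⟩
  have hβ : ∀ i, |β i| ≤ β₀ := fun i => hβ₀.2 ⟨i, rfl⟩
  have hξ1 : ∀ i, ξ i ≤ ξone := fun i => hξone.2 ⟨i, rfl⟩
  have hξ2 : ∀ i, ξtwo⁻¹ ≤ ξ i := fun i => hξtwo.2 ⟨i, rfl⟩
  have hq0 : 0 ≤ q₀ := by linarith [hq i, Q_diag_nonpos hQ i]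
  have hβ0 : 0 ≤ β₀ := (abs_nonneg _).trans (hβ i)
  have hξ10 : 0 < ξone := (hξpos i).trans_le (hξ1 i)
  obtain ⟨i₀, hi₀⟩ := hξtwo.1
  have hξ20 : 0 < ξtwo := inv_pos.1 (hi₀ ▸ hξpos i₀)
  have hξM : ∀ i, ξone ≤ ξone * ξtwo * ξ i := by
    intro i
    have h1 : 1 ≤ ξtwo * ξ i := by
      have := mul_le_mul_of_nonneg_left (hξ2 i) hξ20.le
      rwa [mul_inv_cancel₀ hξ20.ne'] at this
    have := mul_le_mul_of_nonneg_left h1 hξ10.le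
    linarith
  set M := ξone * ξtwo with hM
  have hM1 : 1 ≤ M := by
    have h1 := hξ1 i₀
    rw [hi₀] at h1
    have := mul_le_mul_of_nonneg_right h1 hξ20.le
    rwa [inv_mul_cancel₀ hξ20.ne'] at this
  have hM0 : 0 < M := by linarith
  have hκ' : κ = ((1 + 12 * q₀) * β₀ + 8 * L ^ 2 * (5 + 6 * β₀)) * M := by rw [hκ, hM]; ring
  obtain ⟨hLpos, hδL, hδκ⟩ := step_consts hL hlam₀pos (by rw [hκ']; positivity) hδ0 hδ
  have hEL := euler_lagrange hQ hrev hπpos hlam₀inf hξnorm hξmin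
  -- bounds on the eigenvalue
  have hbq : ∀ i, β i ≤ q₀ := by
    intro i
    have h1 : Q i i * ξ i ≤ ∑ j, Q i j * ξ j := by
      rw [← Finset.add_sum_erase _ _ (Finset.mem_univ i)]
      have : 0 ≤ ∑ j ∈ Finset.univ.erase i, Q i j * ξ j :=
        Finset.sum_nonneg fun j hj =>
          mul_nonneg (hQ.1 _ j (Finset.ne_of_mem_erase hj).symm) (hξpos j).le
      linarith
    rw [hEL i] at h1
    have h2 := le_of_mul_le_mul_right h1 (hξpos i)
    linarith [hq i]
  have hlamβ : lam₀ ≤ -β i₀ := by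
    have h1 : 0 ≤ ∑ j, Q i₀ j * ξ j := by
      have e : ∑ j, Q i₀ j * ξ j = ∑ j, Q i₀ j * (ξ j - ξ i₀) := by
        simp only [mul_sub, Finset.sum_sub_distrib, ← Finset.sum_mul, hQ.2, zero_mul, sub_zero]
      rw [e]
      refine Finset.sum_nonneg fun j _ => ?_
      by_cases h : i₀ = j
      · subst h; simp
      · exact mul_nonneg (hQ.1 _ _ h) (by linarith [hξ2 j])
    rw [hEL i₀] at h1
    by_contra hcon
    push Not at hcon
    nlinarith [mul_pos (by linarith : 0 < lam₀ + β i₀) (hξpos i₀)]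
  have hlamβ₀ : lam₀ ≤ β₀ := hlamβ.trans ((neg_le_abs _).trans (hβ i₀))
  have hlamL : lam₀ ≤ 2 * L := by linarith [hβL i₀]
  set t := Real.sqrt δ with ht
  have ht2 : t ^ 2 = δ := Real.sq_sqrt hδ0.le
  have ht0 : 0 < t := Real.sqrt_pos.2 hδ0
  have ht1 : t < 1 := by
    rw [ht, Real.sqrt_lt' one_pos]; simpa using hδ1
  rw [hκ'] at hδκ
  have hkey := scalar_key ht0 ht1 hLpos (by rw [ht2]; exact hδL) hlam₀pos hlamβ₀ hlamL
    (hβL i) (hbq i) (hβ i) hM1 hq0 hδκ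
  rw [ht2] at hkey
  refine ⟨hkey.1, ?_⟩
  -- Taylor remainder
  have hG1 : ∀ j, |∑ k, Q j k * ξ k| ≤ 2 * β₀ * ξone := by
    intro j
    rw [hEL j, abs_mul, abs_of_pos (hξpos j)]
    refine mul_le_mul ?_ (hξ1 j) (hξpos j).le (by positivity)
    rw [abs_neg]
    refine (abs_add_le _ _).trans ?_
    rw [abs_of_pos hlam₀pos]
    linarith [hβ j]
  have hG := Q_bound hQ hq hG1
  have hβ0' : 0 < β₀ := hlam₀pos.trans_le hlamβ₀
  have k4 : 12 * (t * q₀) ≤ 1 := by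
    have h1 : 12 * (t * (q₀ * β₀ * M)) ≤ β₀ := by
      have h0 : 0 ≤ t * (β₀ * M) + t * (8 * L ^ 2 * (5 + 6 * β₀) * M) := by positivity
      nlinarith
    have h2 : 0 ≤ t * q₀ * β₀ * (M - 1) := mul_nonneg (by positivity) (by linarith)
    have h3 : β₀ * (12 * (t * q₀)) ≤ β₀ * 1 := by linarith
    exact le_of_mul_le_mul_left h3 hβ0'
  have hδt : δ ≤ t := by rw [← ht2]; nlinarith
  have hδq : 2 * q₀ * δ ≤ 1 / 6 := by
    have := mul_le_mul_of_nonneg_right hδt hq0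
    linarith
  have hT := taylor hQ hδ0 hq hq0 (by linarith) hG i
  have hinv : (1 - 2 * q₀ * δ)⁻¹ ≤ 6 / 5 := by
    rw [inv_le_comm₀ (by linarith) (by norm_num)]; linarith
  have hT2 : 1 / 2 * δ ^ 2 * (2 * q₀ * (2 * β₀ * ξone)) * (1 - 2 * q₀ * δ)⁻¹
      ≤ 12 / 5 * δ ^ 2 * q₀ * β₀ * M * ξ i := by
    calc _ ≤ 1 / 2 * δ ^ 2 * (2 * q₀ * (2 * β₀ * ξone)) * (6 / 5) := by gcongr
      _ = 12 / 5 * δ ^ 2 * q₀ * β₀ * ξone := by ring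
      _ ≤ 12 / 5 * δ ^ 2 * q₀ * β₀ * (M * ξ i) :=
          mul_le_mul_of_nonneg_left (hξM i) (by positivity)
      _ = _ := by ring
  have hT3 := (le_abs_self _).trans (hT.trans hT2)
  rw [hEL i] at hT3
  have hP : ∑ j, matExp (δ • Q) i j * ξ j
      ≤ (1 - δ * (lam₀ + β i) + 12 / 5 * δ ^ 2 * q₀ * β₀ * M) * ξ i := by linarith
  calc _ ≤ (1 + δ * β i + δ ^ 2 * L ^ 2) *
        ((1 - δ * (lam₀ + β i) + 12 / 5 * δ ^ 2 * q₀ * β₀ * M) * ξ i) :=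
        mul_le_mul_of_nonneg_left hP hkey.1
    _ = ((1 + δ * β i + δ ^ 2 * L ^ 2) *
        (1 - δ * (lam₀ + β i) + 12 / 5 * δ ^ 2 * q₀ * β₀ * M)) * ξ i := by ring
    _ < 1 * ξ i := mul_lt_mul_of_pos_right hkey.2 (hξpos i)
    _ = ξ i := one_mul _

/-- Square-root weights. -/
lemma sqrt_weights {N : ℕ} {P : Fin N → Fin N → ℝ} (hP0 : ∀ i j, 0 < P i j)
    (hP1 : ∀ i, ∑ j, P i j = 1) {a ξ : Fin N → ℝ} (ha : ∀ i, 0 ≤ a i) (hξ : ∀ i, 0 < ξ i)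
    (h : ∀ i, a i * ∑ j, P i j * ξ j < ξ i) :
    ∃ r : ℝ, 0 ≤ r ∧ r < 1 ∧
      ∀ i, Real.sqrt (a i) * ∑ j, P i j * Real.sqrt (ξ j) ≤ r * Real.sqrt (ξ i) := by
  have hS0 : ∀ i, 0 ≤ ∑ j, P i j * ξ j := fun i =>
    Finset.sum_nonneg fun j _ => mul_nonneg (hP0 i j).le (hξ j).le
  have hJ : ∀ i, ∑ j, P i j * Real.sqrt (ξ j) ≤ Real.sqrt (∑ j, P i j * ξ j) := by
    intro i
    apply Real.le_sqrt_of_sq_le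
    have hcs := Finset.sum_mul_sq_le_sq_mul_sq Finset.univ (fun j => Real.sqrt (P i j))
      (fun j => Real.sqrt (P i j) * Real.sqrt (ξ j))
    have e1 : ∀ j, Real.sqrt (P i j) * (Real.sqrt (P i j) * Real.sqrt (ξ j))
        = P i j * Real.sqrt (ξ j) := fun j => by
      rw [← mul_assoc, Real.mul_self_sqrt (hP0 i j).le]
    have e2 : ∀ j, Real.sqrt (P i j) ^ 2 = P i j := fun j => Real.sq_sqrt (hP0 i j).le
    have e3 : ∀ j, (Real.sqrt (P i j) * Real.sqrt (ξ j)) ^ 2 = P i j * ξ j := fun j => by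
      rw [mul_pow, Real.sq_sqrt (hP0 i j).le, Real.sq_sqrt (hξ j).le]
    simp only [e1, e2, e3, hP1, one_mul] at hcs
    exact hcs
  set ρ : Fin N → ℝ := fun i => Real.sqrt (a i * ∑ j, P i j * ξ j) / Real.sqrt (ξ i) with hρ
  have hρ0 : ∀ i, 0 ≤ ρ i := fun i => by positivity
  have hρ1 : ∀ i, ρ i < 1 := fun i => by
    rw [hρ]
    simp only
    rw [div_lt_one (Real.sqrt_pos.2 (hξ i))]
    exact Real.sqrt_lt_sqrt (mul_nonneg (ha i) (hS0 i)) (h i)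
  have hr : ∃ r : ℝ, 0 ≤ r ∧ r < 1 ∧ ∀ i, ρ i ≤ r := by
    rcases isEmpty_or_nonempty (Fin N) with hE | hE
    · exact ⟨0, le_rfl, one_pos, fun i => (hE.false i).elim⟩
    · obtain ⟨i₀, hi₀⟩ := Finite.exists_max ρ
      exact ⟨ρ i₀, hρ0 _, hρ1 _, hi₀⟩
  obtain ⟨r, hr0, hr1, hr⟩ := hr
  refine ⟨r, hr0, hr1, fun i => ?_⟩
  calc _ ≤ Real.sqrt (a i) * Real.sqrt (∑ j, P i j * ξ j) :=
        mul_le_mul_of_nonneg_left (hJ i) (Real.sqrt_nonneg _)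
    _ = Real.sqrt (a i * ∑ j, P i j * ξ j) := (Real.sqrt_mul (ha i) _).symm
    _ = ρ i * Real.sqrt (ξ i) := (div_mul_cancel₀ _ (Real.sqrt_pos.2 (hξ i)).ne').symm
    _ ≤ r * Real.sqrt (ξ i) := mul_le_mul_of_nonneg_right (hr i) (Real.sqrt_nonneg _)

end EMAux

/-! ### The Gaussian step -/

namespace EMAux

instance stdGaussianPi_prob (m : ℕ) : IsProbabilityMeasure (stdGaussianPi m) := by
  unfold stdGaussianPi; infer_instance

lemma coord_memLp {m : ℕ} (j : Fin m) : MemLp (fun z : Fin m → ℝ => z j) 2 (stdGaussianPi m) := by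
  have h : MemLp id 2 (gaussianReal 0 1) := memLp_id_gaussianReal 2
  exact h.comp_measurePreserving (measurePreserving_eval (fun _ : Fin m => gaussianReal 0 1) j)

lemma coord_integral {m : ℕ} (j : Fin m) : ∫ z : Fin m → ℝ, z j ∂(stdGaussianPi m) = 0 := by
  have := integral_comp_eval (μ := fun _ : Fin m => gaussianReal 0 1) (i := j) (f := fun x : ℝ => x)
    aestronglyMeasurable_id
  rw [stdGaussianPi, this, integral_id_gaussianReal]

lemma lin_memLp {m : ℕ} (c : Fin m → ℝ) :
    MemLp (fun z : Fin m → ℝ => ∑ j, c j * z j) 2 (stdGaussianPi m) :=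
  memLp_finsetSum _ fun j _ => (coord_memLp j).const_mul (c j)

lemma lin_integral {m : ℕ} (c : Fin m → ℝ) :
    ∫ z : Fin m → ℝ, ∑ j, c j * z j ∂(stdGaussianPi m) = 0 := by
  rw [integral_finsetSum _ fun j _ => ((coord_memLp j).integrable one_le_two).const_mul (c j)]
  simp [integral_const_mul, coord_integral]

lemma lin_sq {m : ℕ} (c : Fin m → ℝ) :
    ∫ z : Fin m → ℝ, (∑ j, c j * z j) ^ 2 ∂(stdGaussianPi m) = ∑ j, c j ^ 2 := by
  have h := variance_eq_sub (lin_memLp c)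
  rw [lin_integral] at h
  have h2 := variance_sum_pi (μ := fun _ : Fin m => gaussianReal 0 1)
    (X := fun j x => c j * x) (fun j => (memLp_id_gaussianReal 2 : MemLp id 2 (gaussianReal 0 1)).const_mul (c j))
  have e : (∑ j, fun z : Fin m → ℝ => c j * z j) = fun z => ∑ j, c j * z j := by
    ext z; simp
  rw [e] at h2
  have hc : ∀ j, Var[fun x : ℝ => c j * x; gaussianReal 0 1] = c j ^ 2 := by
    intro j
    have h5 := variance_const_mul (c j) (fun x : ℝ => x) (gaussianReal 0 1)
    rw [h5, variance_fun_id_gaussianReal]; simp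
  replace h2 := h2.trans (Finset.sum_congr rfl fun j _ => hc j)
  have h3 : ∫ z : Fin m → ℝ, (∑ j, c j * z j) ^ 2 ∂(stdGaussianPi m)
     = Var[fun z : Fin m → ℝ => ∑ j, c j * z j; stdGaussianPi m] := by
    rw [h]; simp
  rw [h3]
  unfold stdGaussianPi
  exact h2

lemma affine_sq {m : ℕ} (u s : ℝ) (c : Fin m → ℝ) :
    Integrable (fun z : Fin m → ℝ => (u + s * ∑ j, c j * z j) ^ 2) (stdGaussianPi m) ∧
    ∫ z : Fin m → ℝ, (u + s * ∑ j, c j * z j) ^ 2 ∂(stdGaussianPi m)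
      = u ^ 2 + s ^ 2 * ∑ j, c j ^ 2 := by
  have i1 : Integrable (fun z : Fin m → ℝ => (∑ j, c j * z j) ^ 2) (stdGaussianPi m) :=
    (lin_memLp c).integrable_sq
  have i2 : Integrable (fun z : Fin m → ℝ => ∑ j, c j * z j) (stdGaussianPi m) :=
    (lin_memLp c).integrable one_le_two
  have e : (fun z : Fin m → ℝ => (u + s * ∑ j, c j * z j) ^ 2)
      = fun z => u ^ 2 + 2 * u * s * (∑ j, c j * z j) + s ^ 2 * (∑ j, c j * z j) ^ 2 := by
    ext z; ring
  have i3 : Integrable (fun z : Fin m → ℝ => u ^ 2 + 2 * u * s * (∑ j, c j * z j))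
      (stdGaussianPi m) := (integrable_const _).add (i2.const_mul _)
  rw [e]
  refine ⟨i3.add (i1.const_mul _), ?_⟩
  rw [integral_add i3 (i1.const_mul _), integral_add (integrable_const _) (i2.const_mul _),
    integral_const_mul, integral_const_mul, lin_integral, lin_sq]
  simp

/-- The vector `A z` as an element of Euclidean space. -/
noncomputable def gv {n m : ℕ} (A : Matrix (Fin n) (Fin m) ℝ) (z : Fin m → ℝ) :
    EuclideanSpace ℝ (Fin n) := (WithLp.equiv 2 (Fin n → ℝ)).symm (A.mulVec z)

lemma gv_apply {n m : ℕ} (A : Matrix (Fin n) (Fin m) ℝ) (z : Fin m → ℝ) (i : Fin n) :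
    gv A z i = ∑ j, A i j * z j := rfl

lemma gv_sub {n m : ℕ} (A B : Matrix (Fin n) (Fin m) ℝ) (z : Fin m → ℝ) :
    gv (A - B) z = gv A z - gv B z := by
  ext i
  simp [gv_apply, sub_mul]

/-- The Gaussian affine vector. -/
lemma vec_sq {n m : ℕ} (u : EuclideanSpace ℝ (Fin n)) (s : ℝ) (A : Matrix (Fin n) (Fin m) ℝ) :
    Integrable (fun z : Fin m → ℝ =>
      ‖u + s • gv A z‖ ^ 2) (stdGaussianPi m) ∧
    ∫ z : Fin m → ℝ, ‖u + s • gv A z‖ ^ 2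
      ∂(stdGaussianPi m) = ‖u‖ ^ 2 + s ^ 2 * hsNorm A ^ 2 := by
  have e : (fun z : Fin m → ℝ => ‖u + s • gv A z‖ ^ 2)
      = fun z => ∑ i, (u i + s * ∑ j, A i j * z j) ^ 2 := by
    ext z
    rw [EuclideanSpace.real_norm_sq_eq]
    simp [gv_apply]
  rw [e]
  refine ⟨integrable_finsetSum _ fun i _ => (affine_sq (u i) s (A i)).1, ?_⟩
  rw [integral_finsetSum _ fun i _ => (affine_sq (u i) s (A i)).1]
  rw [EuclideanSpace.real_norm_sq_eq, hsNorm, Real.sq_sqrt (by positivity), Finset.mul_sum,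
    ← Finset.sum_add_distrib]
  exact Finset.sum_congr rfl fun i _ => (affine_sq (u i) s (A i)).2

/-- One Euler–Maruyama step driven by `z`. -/
noncomputable def emStep {n m N : ℕ}
    (b : EuclideanSpace ℝ (Fin n) → Fin N → EuclideanSpace ℝ (Fin n))
    (σ : EuclideanSpace ℝ (Fin n) → Fin N → Matrix (Fin n) (Fin m) ℝ)
    (δ : ℝ) (x : EuclideanSpace ℝ (Fin n)) (i : Fin N) (z : Fin m → ℝ) :
    EuclideanSpace ℝ (Fin n) :=
  x + δ • b x i + Real.sqrt δ • gv (σ x i) z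

lemma vec_cont {n m : ℕ} (A : Matrix (Fin n) (Fin m) ℝ) :
    Continuous fun z : Fin m → ℝ => gv A z := by
  refine (PiLp.continuous_toLp 2 _).comp ?_
  fun_prop

lemma abs_le_hsNorm {n m : ℕ} (A : Matrix (Fin n) (Fin m) ℝ) (i : Fin n) (j : Fin m) :
    |A i j| ≤ hsNorm A := by
  apply Real.abs_le_sqrt
  refine le_trans ?_ (Finset.single_le_sum (f := fun i => ∑ j, A i j ^ 2)
    (fun i _ => Finset.sum_nonneg fun j _ => sq_nonneg _) (Finset.mem_univ i))
  exact Finset.single_le_sum (f := fun j => A i j ^ 2) (fun j _ => sq_nonneg _) (Finset.mem_univ j)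

section

variable {n m N : ℕ}
  {b : EuclideanSpace ℝ (Fin n) → Fin N → EuclideanSpace ℝ (Fin n)}
  {σ : EuclideanSpace ℝ (Fin n) → Fin N → Matrix (Fin n) (Fin m) ℝ}
  {L : ℝ}

lemma b_cont (hLip : ∀ i x y, ‖b x i - b y i‖ + hsNorm (σ x i - σ y i) ≤ L * ‖x - y‖) (i : Fin N) :
    Continuous fun x => b x i := by
  have : LipschitzWith (Real.toNNReal L) fun x => b x i := by
    apply LipschitzWith.of_dist_le_mul
    intro x y
    rw [dist_eq_norm, dist_eq_norm]
    have h1 := hLip i x y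
    have h2 : 0 ≤ hsNorm (σ x i - σ y i) := Real.sqrt_nonneg _
    have h3 : L * ‖x - y‖ ≤ Real.toNNReal L * ‖x - y‖ := by
      gcongr; exact Real.le_coe_toNNReal _
    linarith
  exact this.continuous

lemma σ_cont (hLip : ∀ i x y, ‖b x i - b y i‖ + hsNorm (σ x i - σ y i) ≤ L * ‖x - y‖) (i : Fin N)
    (k : Fin n) (l : Fin m) : Continuous fun x => σ x i k l := by
  have : LipschitzWith (Real.toNNReal L) fun x => σ x i k l := by
    apply LipschitzWith.of_dist_le_mul
    intro x y
    rw [Real.dist_eq, dist_eq_norm]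
    have h1 := hLip i x y
    have h2 := abs_le_hsNorm (σ x i - σ y i) k l
    rw [Matrix.sub_apply] at h2
    have h3 : L * ‖x - y‖ ≤ Real.toNNReal L * ‖x - y‖ := by
      gcongr; exact Real.le_coe_toNNReal _
    linarith [norm_nonneg (b x i - b y i)]
  exact this.continuous

lemma emStep_cont (hLip : ∀ i x y, ‖b x i - b y i‖ + hsNorm (σ x i - σ y i) ≤ L * ‖x - y‖)
    (δ : ℝ) (i : Fin N) :
    Continuous fun p : EuclideanSpace ℝ (Fin n) × (Fin m → ℝ) => emStep b σ δ p.1 i p.2 := by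
  unfold emStep
  have h1 := b_cont hLip i
  have h2 : Continuous fun p : EuclideanSpace ℝ (Fin n) × (Fin m → ℝ) => b p.1 i :=
    h1.comp continuous_fst
  suffices h3 : Continuous fun p : EuclideanSpace ℝ (Fin n) × (Fin m → ℝ) => gv (σ p.1 i) p.2 by
    fun_prop
  refine (PiLp.continuous_toLp 2 _).comp ?_
  refine continuous_pi fun k => ?_
  simp only [Matrix.mulVec, dotProduct]
  refine continuous_finsetSum _ fun l _ => ?_
  exact ((σ_cont hLip i k l).comp continuous_fst).mul ((continuous_apply l).comp continuous_snd)

lemma emStep_cont_z (δ : ℝ) (x : EuclideanSpace ℝ (Fin n)) (i : Fin N) :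
    Continuous fun z : Fin m → ℝ => emStep b σ δ x i z := by
  unfold emStep
  have := vec_cont (σ x i)
  fun_prop

lemma integrable_of_sq {f : (Fin m → ℝ) → EuclideanSpace ℝ (Fin n)}
    (hf : AEStronglyMeasurable f (stdGaussianPi m))
    (h : Integrable (fun z => ‖f z‖ ^ 2) (stdGaussianPi m)) :
    MemLp f 2 (stdGaussianPi m) :=
  (memLp_two_iff_integrable_sq_norm hf).2 h

lemma emStep_integrable (δ : ℝ) (x : EuclideanSpace ℝ (Fin n)) (i : Fin N) :
    Integrable (fun z : Fin m → ℝ => emStep b σ δ x i z) (stdGaussianPi m) :=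
  (integrable_of_sq (emStep_cont_z δ x i).aestronglyMeasurable
    (vec_sq (x + δ • b x i) (Real.sqrt δ) (σ x i)).1).integrable one_le_two

lemma integral_norm_le_sqrt {f : (Fin m → ℝ) → EuclideanSpace ℝ (Fin n)}
    (hf : AEStronglyMeasurable f (stdGaussianPi m))
    (h : Integrable (fun z => ‖f z‖ ^ 2) (stdGaussianPi m)) :
    ∫ z, ‖f z‖ ∂(stdGaussianPi m) ≤ Real.sqrt (∫ z, ‖f z‖ ^ 2 ∂(stdGaussianPi m)) := by
  have hL : MemLp (fun z => ‖f z‖) 2 (stdGaussianPi m) := (integrable_of_sq hf h).norm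
  have h1 := variance_eq_sub hL
  have h2 := variance_nonneg (fun z => ‖f z‖) (stdGaussianPi m)
  apply Real.le_sqrt_of_sq_le
  rw [h1] at h2
  have h3 : (∫ z, ((fun z => ‖f z‖) ^ 2) z ∂(stdGaussianPi m)) = ∫ z, ‖f z‖ ^ 2 ∂(stdGaussianPi m) := rfl
  rw [h3] at h2
  linarith

lemma emStep_lip (hL : 0 ≤ L)
    (hLip : ∀ i x y, ‖b x i - b y i‖ + hsNorm (σ x i - σ y i) ≤ L * ‖x - y‖)
    {β : Fin N → ℝ}
    (hH2 : ∀ i x y, 2 * (inner ℝ (x - y) (b x i - b y i) : ℝ)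
        + hsNorm (σ x i - σ y i) ^ 2 ≤ β i * ‖x - y‖ ^ 2)
    {δ : ℝ} (hδ : 0 < δ) (x y : EuclideanSpace ℝ (Fin n)) (i : Fin N) :
    ∫ z, ‖emStep b σ δ x i z - emStep b σ δ y i z‖ ∂(stdGaussianPi m)
      ≤ Real.sqrt (1 + δ * β i + δ ^ 2 * L ^ 2) * ‖x - y‖ := by
  have e : ∀ z, emStep b σ δ x i z - emStep b σ δ y i z
      = ((x - y) + δ • (b x i - b y i)) + Real.sqrt δ • gv (σ x i - σ y i) z := by
    intro z
    rw [gv_sub]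
    unfold emStep
    module
  obtain ⟨hi, hv⟩ := vec_sq ((x - y) + δ • (b x i - b y i)) (Real.sqrt δ) (σ x i - σ y i)
  simp only [e]
  have hc := vec_cont (σ x i - σ y i)
  have hc2 : Continuous fun z => ((x - y) + δ • (b x i - b y i))
      + Real.sqrt δ • gv (σ x i - σ y i) z := by fun_prop
  refine (integral_norm_le_sqrt hc2.aestronglyMeasurable hi).trans ?_
  rw [hv, Real.sq_sqrt hδ.le]
  have hsq : Real.sqrt (1 + δ * β i + δ ^ 2 * L ^ 2) * ‖x - y‖
      = Real.sqrt ((1 + δ * β i + δ ^ 2 * L ^ 2) * ‖x - y‖ ^ 2) := by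
    rw [Real.sqrt_mul' _ (by positivity), Real.sqrt_sq (norm_nonneg _)]
  rw [hsq]
  apply Real.sqrt_le_sqrt
  rw [norm_add_sq_real, norm_smul, inner_smul_right, Real.norm_eq_abs, abs_of_pos hδ]
  have h1 : ‖b x i - b y i‖ ≤ L * ‖x - y‖ := by
    have h2 : 0 ≤ hsNorm (σ x i - σ y i) := Real.sqrt_nonneg _
    linarith [hLip i x y]
  have h3 : ‖b x i - b y i‖ ^ 2 ≤ (L * ‖x - y‖) ^ 2 := by gcongr
  have h4 := mul_le_mul_of_nonneg_left (hH2 i x y) hδ.le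
  have h5 := mul_le_mul_of_nonneg_left h3 (sq_nonneg δ)
  linarith

lemma β_lower (hn : 0 < n)
    (hLip : ∀ i x y, ‖b x i - b y i‖ + hsNorm (σ x i - σ y i) ≤ L * ‖x - y‖)
    {β : Fin N → ℝ}
    (hH2 : ∀ i x y, 2 * (inner ℝ (x - y) (b x i - b y i) : ℝ)
        + hsNorm (σ x i - σ y i) ^ 2 ≤ β i * ‖x - y‖ ^ 2) (i : Fin N) : -(2 * L) ≤ β i := by
  set x : EuclideanSpace ℝ (Fin n) := EuclideanSpace.single ⟨0, hn⟩ (1 : ℝ)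
  have hx : ‖x - 0‖ = 1 := by simp [x]
  have h1 := hH2 i x 0
  have h2 := hLip i x 0
  have h3 := abs_real_inner_le_norm (x - 0) (b x i - b 0 i)
  have h4 : 0 ≤ hsNorm (σ x i - σ 0 i) := Real.sqrt_nonneg _
  rw [hx] at h1 h2 h3
  have h5 := neg_abs_le (inner ℝ (x - 0) (b x i - b 0 i) : ℝ)
  nlinarith [sq_nonneg (hsNorm (σ x i - σ 0 i))]

end

end EMAux

/-! ### The kernel -/

namespace EMAux

set_option linter.unusedVariables false

section

variable {n m N : ℕ} {Q : Matrix (Fin N) (Fin N) ℝ}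
  {b : EuclideanSpace ℝ (Fin n) → Fin N → EuclideanSpace ℝ (Fin n)}
  {σ : EuclideanSpace ℝ (Fin n) → Fin N → Matrix (Fin n) (Fin m) ℝ}
  {L : ℝ}

lemma emStep_meas (δ : ℝ) (x : EuclideanSpace ℝ (Fin n)) (i j : Fin N) :
    Measurable fun z : Fin m → ℝ => (emStep b σ δ x i z, j) :=
  (emStep_cont_z δ x i).measurable.prodMk measurable_const

instance rowMeasure_finite (P : Matrix (Fin N) (Fin N) ℝ) (i : Fin N) :
    IsFiniteMeasure (rowMeasure P i) := by
  refine ⟨?_⟩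
  unfold rowMeasure
  simp [ENNReal.sum_lt_top]

lemma EMKernel_eq (δ : ℝ) (x : EuclideanSpace ℝ (Fin n)) (i : Fin N) :
    EMKernel Q b σ δ (x, i) = ∑ j, ENNReal.ofReal (matExp (δ • Q) i j) •
      Measure.map (fun z : Fin m → ℝ => (emStep b σ δ x i z, j)) (stdGaussianPi m) := by
  have hmeas : Measurable fun zj : (Fin m → ℝ) × Fin N => (emStep b σ δ x i zj.1, zj.2) :=
    ((emStep_cont_z δ x i).measurable.comp measurable_fst).prodMk measurable_snd
  have e : EMKernel Q b σ δ (x, i)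
      = Measure.map (fun zj : (Fin m → ℝ) × Fin N => (emStep b σ δ x i zj.1, zj.2))
        ((stdGaussianPi m).prod (rowMeasure (matExp (δ • Q)) i)) := rfl
  rw [e]
  ext A hA
  rw [Measure.map_apply hmeas hA, Measure.prod_apply_symm (hmeas hA), rowMeasure,
    lintegral_finsetSum_measure, Measure.finsetSum_apply]
  refine Finset.sum_congr rfl fun j _ => ?_
  rw [lintegral_smul_measure, lintegral_dirac, Measure.smul_apply,
    Measure.map_apply (emStep_meas δ x i j) hA]
  rfl

lemma EMKernel_measurable
    (hLip : ∀ i x y, ‖b x i - b y i‖ + hsNorm (σ x i - σ y i) ≤ L * ‖x - y‖) (δ : ℝ) :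
    Measurable (EMKernel Q b σ δ) := by
  refine Measure.measurable_of_measurable_coe _ fun A hA => ?_
  apply measurable_from_prod_countable_left
  intro i
  simp only [EMKernel_eq, Measure.finsetSum_apply, Measure.smul_apply, smul_eq_mul]
  refine Finset.measurable_sum _ fun j _ => ?_
  refine Measurable.const_mul ?_ _
  have hF : Measurable fun p : EuclideanSpace ℝ (Fin n) × (Fin m → ℝ) =>
      (emStep b σ δ p.1 i p.2, j) :=
    (emStep_cont hLip δ i).measurable.prodMk measurable_const
  have := measurable_measure_prodMk_left (ν := stdGaussianPi m) (hF hA)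
  convert this using 2 with x
  rw [Measure.map_apply (emStep_meas δ x i j) hA]
  rfl

/-- The Euler–Maruyama kernel as a bundled kernel. -/
noncomputable def emK (hLip : ∀ i x y, ‖b x i - b y i‖ + hsNorm (σ x i - σ y i) ≤ L * ‖x - y‖)
    (Q : Matrix (Fin N) (Fin N) ℝ) (δ : ℝ) :
    Kernel (EuclideanSpace ℝ (Fin n) × Fin N) (EuclideanSpace ℝ (Fin n) × Fin N) :=
  ⟨EMKernel Q b σ δ, EMKernel_measurable hLip δ⟩

lemma emK_apply (hLip : ∀ i x y, ‖b x i - b y i‖ + hsNorm (σ x i - σ y i) ≤ L * ‖x - y‖)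
    (Q : Matrix (Fin N) (Fin N) ℝ) (δ : ℝ) (q : EuclideanSpace ℝ (Fin n) × Fin N) :
    emK hLip Q δ q = EMKernel Q b σ δ q := rfl

lemma emK_markov (hLip : ∀ i x y, ‖b x i - b y i‖ + hsNorm (σ x i - σ y i) ≤ L * ‖x - y‖)
    (Q : Matrix (Fin N) (Fin N) ℝ) (δ : ℝ) (hP0 : ∀ i j, 0 < matExp (δ • Q) i j)
    (hP1 : ∀ i, ∑ j, matExp (δ • Q) i j = 1) : IsMarkovKernel (emK hLip Q δ) := by
  refine ⟨fun q => ⟨?_⟩⟩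
  obtain ⟨x, i⟩ := q
  rw [emK_apply, EMKernel_eq, Measure.finsetSum_apply]
  have : ∀ j, (ENNReal.ofReal (matExp (δ • Q) i j) •
      Measure.map (fun z : Fin m → ℝ => (emStep b σ δ x i z, j)) (stdGaussianPi m)) Set.univ
      = ENNReal.ofReal (matExp (δ • Q) i j) := by
    intro j
    rw [Measure.smul_apply, Measure.map_apply (emStep_meas δ x i j) MeasurableSet.univ]
    simp
  simp only [this]
  rw [← ENNReal.ofReal_sum_of_nonneg fun j _ => (hP0 i j).le, hP1, ENNReal.ofReal_one]

lemma emK_formula (hLip : ∀ i x y, ‖b x i - b y i‖ + hsNorm (σ x i - σ y i) ≤ L * ‖x - y‖)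
    (Q : Matrix (Fin N) (Fin N) ℝ) (δ : ℝ) (hP0 : ∀ i j, 0 < matExp (δ • Q) i j)
    (x : EuclideanSpace ℝ (Fin n)) (i : Fin N)
    (g : EuclideanSpace ℝ (Fin n) × Fin N → ℝ) (hg : Continuous g)
    (hgi : ∀ j, Integrable (fun z => g (emStep b σ δ x i z, j)) (stdGaussianPi m)) :
    Integrable g (emK hLip Q δ (x, i)) ∧ ∫ q, g q ∂(emK hLip Q δ (x, i))
      = ∑ j, matExp (δ • Q) i j * ∫ z, g (emStep b σ δ x i z, j) ∂(stdGaussianPi m) := by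
  rw [emK_apply, EMKernel_eq]
  have h1 : ∀ j, Integrable g (ENNReal.ofReal (matExp (δ • Q) i j) •
      Measure.map (fun z : Fin m → ℝ => (emStep b σ δ x i z, j)) (stdGaussianPi m)) := by
    intro j
    refine Integrable.smul_measure ?_ ENNReal.ofReal_ne_top
    exact (integrable_map_measure hg.aestronglyMeasurable (emStep_meas δ x i j).aemeasurable).2
      (hgi j)
  refine ⟨integrable_finsetSum_measure.2 fun j _ => h1 j, ?_⟩
  rw [integral_finsetSum_measure fun j _ => h1 j]
  refine Finset.sum_congr rfl fun j _ => ?_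
  rw [integral_smul_measure, ENNReal.toReal_ofReal (hP0 i j).le,
    integral_map (emStep_meas δ x i j).aemeasurable hg.aestronglyMeasurable, smul_eq_mul]

lemma invariant_iff (hLip : ∀ i x y, ‖b x i - b y i‖ + hsNorm (σ x i - σ y i) ≤ L * ‖x - y‖)
    (Q : Matrix (Fin N) (Fin N) ℝ) (δ : ℝ)
    (μ : Measure (EuclideanSpace ℝ (Fin n) × Fin N)) :
    IsInvariantMeasure (EMKernel Q b σ δ) μ ↔ μ.bind (emK hLip Q δ) = μ := by
  constructor
  · intro h
    ext A hA
    rw [Measure.bind_apply hA (emK hLip Q δ).measurable.aemeasurable]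
    exact h A hA
  · intro h A hA
    have h2 := Measure.bind_apply (m := μ) hA (emK hLip Q δ).measurable.aemeasurable
    rw [h] at h2
    exact h2.symm

end

end EMAux

theorem stmt11 {n m N : ℕ} (hN : 2 ≤ N)
    (Q : Matrix (Fin N) (Fin N) ℝ)
    (hQ : IsConservativeQMatrix Q) (hirr : MatrixIrreducible Q)
    (b : EuclideanSpace ℝ (Fin n) → Fin N → EuclideanSpace ℝ (Fin n))
    (σ : EuclideanSpace ℝ (Fin n) → Fin N → Matrix (Fin n) (Fin m) ℝ)
    -- global Lipschitz condition
    (L : ℝ) (hL : 0 ≤ L)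
    (hLip : ∀ i x y, ‖b x i - b y i‖ + hsNorm (σ x i - σ y i) ≤ L * ‖x - y‖)
    -- condition (H)
    (c₀ : ℝ) (hc₀ : 0 < c₀) (β : Fin N → ℝ)
    (hH1 : ∀ i x, 2 * (inner ℝ x (b x i) : ℝ) + hsNorm (σ x i) ^ 2 ≤ c₀ + β i * ‖x‖ ^ 2)
    (hH2 : ∀ i x y, 2 * (inner ℝ (x - y) (b x i - b y i) : ℝ)
        + hsNorm (σ x i - σ y i) ^ 2 ≤ β i * ‖x - y‖ ^ 2)
    -- `Q` is reversible with respect to the probability measure `π`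
    (π : Fin N → ℝ) (hπpos : ∀ i, 0 < π i) (hπsum : ∑ i, π i = 1)
    (hrev : ∀ i j, π i * Q i j = π j * Q j i)
    -- the principal eigenvalue `λ₀ > 0` and a strictly positive minimizer `ξ`
    (lam₀ : ℝ)
    (hlam₀inf : ∀ f : Fin N → ℝ, ∑ i, π i * f i ^ 2 = 1 → lam₀ ≤ Dform π Q β f)
    (hlam₀pos : 0 < lam₀)
    (ξ : Fin N → ℝ) (hξnorm : ∑ i, π i * ξ i ^ 2 = 1) (hξpos : ∀ i, 0 < ξ i)
    (hξmin : Dform π Q β ξ = lam₀)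
    -- the constants of Theorem 4.1
    (ξone ξtwo β₀ q₀ κ : ℝ)
    (hξone : IsGreatest (Set.range ξ) ξone)
    (hξtwo : IsLeast (Set.range ξ) ξtwo⁻¹)
    (hβ₀ : IsGreatest (Set.range fun i => |β i|) β₀)
    (hq₀ : IsGreatest (Set.range fun i => -Q i i) q₀)
    (hκ : κ = ((1 + 12 * q₀) * β₀ + 8 * L ^ 2 * (5 + 6 * β₀)) * ξone * ξtwo)
    -- the stepsize
    (δ : ℝ) (hδ0 : 0 < δ) (hδ1 : δ < 1)
    (hδ : δ < min (1 / (32 * L ^ 2)) ((lam₀ / κ) ^ 2)) :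
    ∃! πδ : Measure (EuclideanSpace ℝ (Fin n) × Fin N),
      IsProbabilityMeasure πδ ∧ IsInvariantMeasure (EMKernel Q b σ δ) πδ := by
  have hP0 : ∀ i j, 0 < matExp (δ • Q) i j :=
    EMAux.matExp_pos hQ hirr hδ0 (fun i => hq₀.2 ⟨i, rfl⟩)
  have hP1 : ∀ i, ∑ j, matExp (δ • Q) i j = 1 := by
    refine EMAux.matExp_row _ fun i => ?_
    simp only [Matrix.smul_apply, smul_eq_mul, ← Finset.mul_sum, hQ.2, mul_zero]
  have hMk := EMAux.emK_markov hLip Q δ hP0 hP1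
  have hS : ∃ (s v : Fin N → ℝ) (r : ℝ), EMAux.Setup (EMAux.emK hLip Q δ) (stdGaussianPi m)
      (fun i j => matExp (δ • Q) i j) (EMAux.emStep b σ δ) s v r := by
    rcases Nat.eq_zero_or_pos n with hn | hn
    · subst hn
      refine ⟨fun _ => 0, fun _ => 1, 0, ?_⟩
      exact
        { P0 := hP0
          P1 := hP1
          v0 := fun _ => one_pos
          r0 := le_rfl
          r1 := one_pos
          contr := fun i => by simp
          Fmeas := fun x i => (EMAux.emStep_cont_z δ x i).aestronglyMeasurable
          Fint := fun x i => EMAux.emStep_integrable δ x i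
          Flip := fun x y i => by
            have : ∀ z, ‖EMAux.emStep b σ δ x i z - EMAux.emStep b σ δ y i z‖ = 0 := fun z => by
              rw [Subsingleton.elim (EMAux.emStep b σ δ x i z) (EMAux.emStep b σ δ y i z)]; simp
            simp [this]
          formula := fun x i g hg hgi => EMAux.emK_formula hLip Q δ hP0 x i g hg hgi }
    · have hc := EMAux.contraction hQ hL (EMAux.β_lower hn hLip hH2) hπpos hrev hlam₀inf hlam₀pos
        hξnorm hξpos hξmin hξone hξtwo hβ₀ hq₀ hκ hδ0 hδ1 hδ
      obtain ⟨r, hr0, hr1, hr⟩ := EMAux.sqrt_weights hP0 hP1 (fun i => (hc i).1) hξpos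
        (fun i => (hc i).2)
      refine ⟨fun i => Real.sqrt (1 + δ * β i + δ ^ 2 * L ^ 2), fun i => Real.sqrt (ξ i), r, ?_⟩
      exact
        { P0 := hP0
          P1 := hP1
          v0 := fun i => Real.sqrt_pos.2 (hξpos i)
          r0 := hr0
          r1 := hr1
          contr := hr
          Fmeas := fun x i => (EMAux.emStep_cont_z δ x i).aestronglyMeasurable
          Fint := fun x i => EMAux.emStep_integrable δ x i
          Flip := fun x y i => EMAux.emStep_lip hL hLip hH2 hδ0 x y i
          formula := fun x i g hg hgi => EMAux.emK_formula hLip Q δ hP0 x i g hg hgi }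
  obtain ⟨s, v, r, S⟩ := hS
  obtain ⟨μ, hμp, hμ⟩ := S.exists ⟨0, by omega⟩
  refine ⟨μ, ⟨hμp, (EMAux.invariant_iff hLip Q δ μ).2 hμ⟩, ?_⟩
  rintro ν ⟨hνp, hν⟩
  exact S.unique ⟨0, by omega⟩ ((EMAux.invariant_iff hLip Q δ ν).1 hν) hμ
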